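/- Let λ > 1, let α be Diophantine, let θ ∈ ℝ, and fix a constant C₁ ≥ 3 and a sufficiently small ε > 0. Then there exists K such that the following holds for every integer k ≥ K: let φ ∈ ℓ²(ℤ) be a normalized real eigensolution of the almost Mathieu operator, H_{λ,α,θ}φ = Eφ, with global maximum of |φ| at m_s ∈ ℤ satisfying |m_s| ≤ k; let k₀ be an integer with |k₀| ≤ 10C₁k such that |sin π(2θ + k₀α)| = min_{|x| ≤ 10C₁k, x∈ℤ} |sin π(2θ + xα)|; and set U(y) = (φ(y), φ(y−1))ᵀ ∈ ℝ². Then for every integer y with |y| ≤ C₁k, ‖U(y)‖ ≤ e^{εk}·max{ ‖U(m_s)‖·e^{−(ln λ − ε)|y − m_s|}, ‖U(k₀ − m_s)‖·e^{−(ln λ − ε)|y − (k₀ − m_s)|} }. -/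

import Mathlib

noncomputable section

open Filter Real

def distToInt (x : ℝ) : ℝ := |x - round x|

def IsDiophantine (α : ℝ) : Prop :=
  ∃ κ τ : ℝ, 0 < κ ∧ 0 < τ ∧ ∀ k : ℤ, k ≠ 0 → τ / |(k : ℝ)| ^ κ ≤ distToInt (k * α)

def deltaPhase (α θ : ℝ) : ℝ :=
  limsup (fun n : ℤ => -Real.log (distToInt (2 * θ + n * α)) / |(n : ℝ)|) cofinite

def amoPot (lam α θ : ℝ) : ℤ → ℝ := fun n => 2 * lam * Real.cos (2 * Real.pi * (θ + n * α))

def IsEigenfunction (g : ℤ → ℝ) (E : ℝ) (φ : ℤ → ℝ) : Prop :=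
  ∀ n : ℤ, φ (n + 1) + φ (n - 1) + g n * φ n = E * φ n

def deltaPot (g : ℤ → ℝ) : ℝ :=
  limsup (fun n : ℤ => -Real.log (⨆ m : ℤ, |g (n - m) - g m|) / |(n : ℝ)|) cofinite

def matNorm (M : Matrix (Fin 2) (Fin 2) ℝ) : ℝ := ⨆ p : Fin 2 × Fin 2, |M p.1 p.2|

def transfer (g : ℤ → ℝ) (E : ℝ) : ℕ → ℤ → Matrix (Fin 2) (Fin 2) ℝ
  | 0, _ => 1
  | n + 1, k => !![E - g (k + n), -1; 1, 0] * transfer g E n k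

def LyapSup (g : ℤ → ℝ) (E : ℝ) : ℝ :=
  limsup (fun n : ℕ => ⨆ k : ℤ, Real.log (matNorm (transfer g E n k)) / n) atTop

def HasSULE (g : ℤ → ℝ) : Prop :=
  ∃ (Φ : HilbertBasis ℕ ℝ (lp (fun _ : ℤ => ℝ) 2)) (ns : ℕ → ℤ) (γ : ℝ),
    0 < γ ∧
    (∀ s : ℕ, ∃ E : ℝ, IsEigenfunction g E (fun n => Φ s n)) ∧
    ∀ ε : ℝ, 0 < ε → ∃ C : ℝ,
      ∀ (s : ℕ) (n : ℤ),
        |Φ s n| ≤ C * Real.exp (ε * |(ns s : ℝ)|) * Real.exp (-γ * |(n : ℝ) - (ns s : ℝ)|)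

/-- Euclidean norm of the vector (a, b)ᵀ ∈ ℝ². -/
def pairNorm (a b : ℝ) : ℝ := Real.sqrt (a ^ 2 + b ^ 2)

/-!
By Cramer's rule, an eigenfunction at a site of a block is controlled by its values at the two
sites adjacent to the block and by determinants of the restricted operator: it decays
exponentially if the determinant of the whole block is almost as large as the supremum over all
phases. This determinant is a polynomial of degree at most the length `n` of the block in a cosine
of the phase. A lower bound in the manner of Herman makes its growth rate at least `log λ` for
some phase, and Lagrange interpolation through `n + 1` nodes transports largeness to one of the
nodes. We take the nodes from starting points of blocks around two sites `p` and `q`. As `α` is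
Diophantine, products of chords `|2 sin π(x + lα)|` along an orbit are subexponential apart from
their smallest factor, so the interpolation costs only a subexponential factor as long as no two
nodes are close; this can fail only if `p` is close to `q` or to `k₀ - q`. Hence the eigenfunction
decays at `p` or at `q`.

It cannot decay at its maximum `m`, so it decays at all sites away from `m` and from `k₀ - m`, and
a maximum principle turns this into the bound by the two exponential peaks.
-/

section Continuant

variable {R S : Type*} [CommRing R] [CommRing S]

/-- The continuant: the determinant of the tridiagonal `n × n` matrix with diagonal entries
`f k, …, f (k + n - 1)` in which every product of two opposite off-diagonal entries is `w`.
The value `w = 1` gives the finite blocks of a discrete Schrödinger operator; other values of `w`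
are needed to clear denominators in Herman's subharmonicity argument. -/
def continuant (w : R) (f : ℤ → R) : ℕ → ℤ → R
  | 0, _ => 1
  | 1, k => f k
  | n + 2, k => f (k + n + 1) * continuant w f (n + 1) k - w * continuant w f n k

lemma continuant_zero (w : R) (f : ℤ → R) (k : ℤ) : continuant w f 0 k = 1 := rfl

lemma continuant_one (w : R) (f : ℤ → R) (k : ℤ) : continuant w f 1 k = f k := rfl

lemma continuant_add_two (w : R) (f : ℤ → R) (n : ℕ) (k : ℤ) :
    continuant w f (n + 2) k =
      f (k + n + 1) * continuant w f (n + 1) k - w * continuant w f n k := rfl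

lemma continuant_add_two_left (w : R) (f : ℤ → R) (n : ℕ) (k : ℤ) :
    continuant w f (n + 2) k =
      f k * continuant w f (n + 1) (k + 1) - w * continuant w f n (k + 2) := by
  induction n using Nat.twoStepInduction with
  | zero => simp [continuant, mul_comm]
  | one =>
    simp only [continuant, Nat.cast_one, Nat.cast_zero, add_zero, add_assoc, one_add_one_eq_two]
    ring
  | more n ih₀ ih₁ =>
    have last_entry : ∀ (N : ℕ) (j : ℤ), j + N = k + n + 2 → continuant w f (N + 2) j =
        f (k + n + 3) * continuant w f (N + 1) j - w * continuant w f N j := by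
      intro N j hj
      rw [continuant_add_two, show j + N + 1 = k + n + 3 by linarith]
    rw [last_entry (n + 2) k (by push_cast; ring), last_entry (n + 1) (k + 1) (by push_cast; ring),
      last_entry n (k + 2) (by ring), ih₀, ih₁]
    ring

lemma continuant_add_int (w : R) (f : ℤ → R) (n : ℕ) (k m : ℤ) :
    continuant w f n (k + m) = continuant w (fun i => f (i + m)) n k := by
  induction n using Nat.twoStepInduction with
  | zero => rfl
  | one => rfl
  | more n ih₀ ih₁ =>
    rw [continuant_add_two, continuant_add_two, ih₀, ih₁]
    congr 3
    ring

lemma continuant_reflect (w : R) (f : ℤ → R) (n : ℕ) (c k : ℤ) :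
    continuant w (fun i => f (c - i)) n k = continuant w f n (c - k - n + 1) := by
  induction n using Nat.twoStepInduction with
  | zero => rfl
  | one => simp [continuant_one]
  | more n ih₀ ih₁ =>
    rw [continuant_add_two_left w f, continuant_add_two, ih₀, ih₁]
    push_cast
    ring_nf

lemma map_continuant (ψ : R →+* S) (w : R) (f : ℤ → R) (n : ℕ) (k : ℤ) :
    ψ (continuant w f n k) = continuant (ψ w) (fun i => ψ (f i)) n k := by
  induction n using Nat.twoStepInduction with
  | zero => exact map_one ψ
  | one => rfl
  | more n ih₀ ih₁ => simp only [continuant_add_two, map_sub, map_mul, ih₀, ih₁]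

lemma continuant_mul_left (c w : R) (f : ℤ → R) (n : ℕ) (k : ℤ) :
    continuant (c ^ 2 * w) (fun i => c * f i) n k = c ^ n * continuant w f n k := by
  induction n using Nat.twoStepInduction with
  | zero => simp [continuant_zero]
  | one => simp [continuant_one]
  | more n ih₀ ih₁ =>
    simp only [continuant_add_two, ih₀, ih₁]
    ring

lemma continuant_zero_left (f : ℤ → R) (n : ℕ) (k : ℤ) :
    continuant 0 f n k = ∏ i ∈ Finset.range n, f (k + i) := by
  induction n using Nat.twoStepInduction with
  | zero => rfl
  | one => simp [continuant_one]
  | more n _ ih₁ =>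
    rw [continuant_add_two, ih₁, Finset.prod_range_succ _ (n + 1), zero_mul, sub_zero, mul_comm]
    push_cast
    rw [add_assoc]

lemma differentiable_continuant {𝕜 : Type*} [NontriviallyNormedField 𝕜] {w : 𝕜 → 𝕜}
    {f : ℤ → 𝕜 → 𝕜} (hw : Differentiable 𝕜 w) (hf : ∀ i, Differentiable 𝕜 (f i)) (n : ℕ) (k : ℤ) :
    Differentiable 𝕜 fun z => continuant (w z) (fun i => f i z) n k := by
  induction n using Nat.twoStepInduction with
  | zero => exact differentiable_const 1
  | one => exact hf k
  | more n ih₀ ih₁ => exact ((hf _).mul ih₁).sub (hw.mul ih₀)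

lemma abs_continuant_le {f : ℤ → ℝ} {X : ℝ} (hX : 1 ≤ X) (hf : ∀ i, |f i| ≤ X - 1)
    (n : ℕ) (k : ℤ) : |continuant 1 f n k| ≤ X ^ n := by
  induction n using Nat.twoStepInduction with
  | zero => simp [continuant_zero]
  | one => simpa [continuant_one] using (hf k).trans (by linarith)
  | more n ih₀ ih₁ =>
    calc |continuant 1 f (n + 2) k|
        ≤ |f (k + n + 1)| * |continuant 1 f (n + 1) k| + |continuant 1 f n k| := by
          rw [continuant_add_two, one_mul, ← abs_mul]
          exact abs_sub _ _
      _ ≤ (X - 1) * X ^ (n + 1) + X ^ n := by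
          gcongr
          exact hf _
      _ ≤ X ^ (n + 2) := by
          have : 0 ≤ X ^ n * (X - 1) := mul_nonneg (by positivity) (by linarith)
          linear_combination this

end Continuant

section Eigenfunction

variable {g φ : ℤ → ℝ} {E : ℝ}

/-- The determinant of `E - H` restricted to the block `[a, a + n)`, where `H` is the discrete
Schrödinger operator with potential `g`. -/
def blockDet (g : ℤ → ℝ) (E : ℝ) : ℕ → ℤ → ℝ := continuant 1 fun i => E - g i

lemma IsEigenfunction.apply_add_one (h : IsEigenfunction g E φ) (m : ℤ) :
    φ (m + 1) = (E - g m) * φ m - φ (m - 1) := by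
  linear_combination h m

lemma IsEigenfunction.apply_sub_one (h : IsEigenfunction g E φ) (m : ℤ) :
    φ (m - 1) = (E - g m) * φ m - φ (m + 1) := by
  linear_combination h m

lemma blockDet_zero (g : ℤ → ℝ) (E : ℝ) (a : ℤ) : blockDet g E 0 a = 1 := rfl

lemma blockDet_one (g : ℤ → ℝ) (E : ℝ) (a : ℤ) : blockDet g E 1 a = E - g a := rfl

lemma blockDet_add_two (g : ℤ → ℝ) (E : ℝ) (n : ℕ) (a : ℤ) :
    blockDet g E (n + 2) a = (E - g (a + n + 1)) * blockDet g E (n + 1) a - blockDet g E n a := by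
  rw [blockDet, continuant_add_two, one_mul]

lemma IsEigenfunction.blockDet_succ_mul (h : IsEigenfunction g E φ) (a : ℤ) (i : ℕ) :
    blockDet g E (i + 1) a * φ (a + i) = blockDet g E i a * φ (a + i + 1) + φ (a - 1) := by
  induction i with
  | zero =>
    simp only [blockDet_zero, blockDet_one, Nat.cast_zero, add_zero, zero_add]
    linear_combination -h a
  | succ i ih =>
    have hstep := h.apply_add_one (a + i + 1)
    rw [add_sub_cancel_right] at hstep
    rw [blockDet_add_two]
    push_cast
    rw [← add_assoc a, hstep]
    linear_combination ih

/-- Green's formula: Cramer's rule for the values of `φ` in a block in terms of the two values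
adjacent to it. -/
lemma IsEigenfunction.blockDet_mul (h : IsEigenfunction g E φ) (a : ℤ) (i j : ℕ) :
    blockDet g E (i + 1 + j) a * φ (a + i) =
      blockDet g E j (a + i + 1) * φ (a - 1) + blockDet g E i a * φ (a + i + 1 + j) := by
  induction j using Nat.twoStepInduction with
  | zero =>
    simpa [blockDet_zero, add_comm] using h.blockDet_succ_mul a i
  | one =>
    have hstep := h.apply_add_one (a + i + 1)
    rw [add_sub_cancel_right] at hstep
    rw [blockDet_add_two, blockDet_one, Nat.cast_one, hstep]
    linear_combination (E - g (a + i + 1)) * h.blockDet_succ_mul a i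
  | more j ih₀ ih₁ =>
    have hstep := h.apply_add_one (a + i + 1 + (j + 1))
    rw [show a + i + 1 + (j + 1 : ℤ) - 1 = a + i + 1 + j by ring] at hstep
    rw [← add_assoc, blockDet_add_two, blockDet_add_two]
    push_cast at ih₁ ⊢
    rw [show a + i + 1 + (j + 2 : ℤ) = a + i + 1 + (j + 1) + 1 by ring, hstep,
      show a + (i + 1 + j : ℤ) + 1 = a + i + 1 + (j + 1) by ring,
      show a + i + 1 + j + 1 = a + i + 1 + (j + 1 : ℤ) by ring]
    linear_combination (E - g (a + i + 1 + (j + 1))) * ih₁ - ih₀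

lemma IsEigenfunction.abs_apply_le_pow_mul (h : IsEigenfunction g E φ) {X P : ℝ} (hX : 1 ≤ X)
    (hg : ∀ i, |E - g i| ≤ X - 1) {m : ℤ} (hm : |φ m| ≤ P) (hm' : |φ (m - 1)| ≤ P) {x : ℤ} {n : ℕ}
    (hx : |x - m| ≤ n) : |φ x| ≤ X ^ n * P := by
  have bound_next : ∀ {e a b Q : ℝ}, |e| ≤ X - 1 → |a| ≤ Q → |b| ≤ Q → |e * a - b| ≤ X * Q := by
    intro e a b Q he ha hb
    calc |e * a - b| ≤ |e| * |a| + |b| := by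
          rw [← abs_mul]
          exact abs_sub _ _
      _ ≤ (X - 1) * Q + Q := by
          gcongr
      _ = X * Q := by ring
  induction n generalizing m P with
  | zero =>
    obtain rfl : x = m := by simpa [sub_eq_zero] using hx
    simpa using hm
  | succ n ih =>
    have hP : 0 ≤ P := (abs_nonneg _).trans hm
    have le_mul {a : ℝ} (ha : |a| ≤ P) : |a| ≤ X * P := ha.trans (le_mul_of_one_le_left hP hX)
    rw [pow_succ, mul_assoc]
    rcases lt_trichotomy x m with hlt | rfl | hgt
    · refine ih (m := m - 1) (le_mul hm') ?_ (by rw [abs_le] at hx ⊢; omega)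
      rw [h.apply_sub_one (m - 1), sub_add_cancel]
      exact bound_next (hg _) hm' hm
    · exact (le_mul hm).trans (le_mul_of_one_le_left (by positivity) (one_le_pow₀ hX))
    · refine ih (m := m + 1) ?_ ?_ (by rw [abs_le] at hx ⊢; omega)
      · rw [h.apply_add_one m]
        exact bound_next (hg _) hm hm'
      · simpa using le_mul hm

lemma IsEigenfunction.abs_energy_le (h : IsEigenfunction g E φ) {G : ℝ} (hg : ∀ i, |g i| ≤ G)
    {m : ℤ} (hmax : ∀ n, |φ n| ≤ |φ m|) (hm : φ m ≠ 0) : |E| ≤ 2 + G := by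
  refine le_of_mul_le_mul_right ?_ (abs_pos.mpr hm)
  calc |E| * |φ m| = |φ (m + 1) + φ (m - 1) + g m * φ m| := by rw [h m, abs_mul]
    _ ≤ |φ (m + 1)| + |φ (m - 1)| + |g m| * |φ m| := by
        rw [← abs_mul]
        exact abs_add_three _ _ _
    _ ≤ |φ m| + |φ m| + G * |φ m| := by
        refine add_le_add_three (hmax _) (hmax _) ?_
        gcongr
        exact hg m
    _ = (2 + G) * |φ m| := by ring

end Eigenfunction

section Herman

lemma ofReal_two_mul_cos (x : ℝ) : ((2 * cos x : ℝ) : ℂ) =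
    Complex.exp (Complex.I * x) + (Complex.exp (Complex.I * x))⁻¹ := by
  rw [← Complex.exp_neg, Complex.ofReal_mul, Complex.ofReal_cos, Complex.ofReal_ofNat,
    Complex.two_cos, mul_comm (x : ℂ), neg_mul, mul_comm (x : ℂ)]

/-- Herman's lower bound for the maximum over the phase. -/
lemma pow_le_of_forall_abs_continuant_le (c b : ℤ → ℝ) {l : ℝ} (hl : 0 ≤ l) (n : ℕ) (k : ℤ) {M : ℝ}
    (hM : ∀ x, |continuant 1 (fun i => c i - 2 * l * cos (x + b i)) n k| ≤ M) : l ^ n ≤ M := by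
  -- Multiplying the `i`-th entry by `z = e ^ (ix)` makes the continuant a polynomial in `z`,
  -- whose modulus is `l ^ n` at `0`; the maximum principle compares this with the unit circle.
  let ω (i : ℤ) : ℂ := Complex.exp (Complex.I * b i)
  let F (z : ℂ) : ℂ :=
    continuant (z ^ 2) (fun i => c i * z - l * (ω i * z ^ 2 + (ω i)⁻¹)) n k
  have hω (i : ℤ) : ‖ω i‖ = 1 := by simp [ω, Complex.norm_exp]
  have hF : Differentiable ℂ F :=
    differentiable_continuant (by fun_prop) (fun i => by fun_prop) n k
  have norm_F_zero : ‖F 0‖ = l ^ n := by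
    simp [F, continuant_zero_left, hω, abs_of_nonneg hl]
  have F_circle (x : ℝ) : F (Complex.exp (Complex.I * x)) = Complex.exp (Complex.I * x) ^ n *
      (continuant 1 (fun i => c i - 2 * l * cos (x + b i)) n k : ℝ) := by
    rw [← Complex.ofRealHom_eq_coe (continuant _ _ _ _), map_continuant, ← continuant_mul_left]
    simp only [F, map_one, mul_one, Complex.ofRealHom_eq_coe]
    congr 1 with i
    have hx : Complex.exp (Complex.I * x) ≠ 0 := Complex.exp_ne_zero _
    have hi : ω i ≠ 0 := Complex.exp_ne_zero _
    have hcos := ofReal_two_mul_cos (x + b i)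
    rw [Complex.ofReal_add, mul_add, Complex.exp_add] at hcos
    rw [mul_right_comm, mul_comm (2 * cos _) l, Complex.ofReal_sub, Complex.ofReal_mul, hcos]
    simp only [ω] at hi ⊢
    field_simp
  rw [← norm_F_zero]
  refine Complex.norm_le_of_forall_mem_frontier_norm_le (U := Metric.ball 0 1)
    Metric.isBounded_ball hF.diffContOnCl (fun z hz => ?_) (subset_closure (by simp))
  rw [frontier_ball _ one_ne_zero, mem_sphere_zero_iff_norm] at hz
  obtain ⟨x, rfl⟩ : ∃ x : ℝ, Complex.exp (Complex.I * x) = z :=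
    ⟨z.arg, by simpa [hz, mul_comm] using z.norm_mul_exp_arg_mul_I⟩
  rw [F_circle, norm_mul, norm_pow, hz, one_pow, one_mul, Complex.norm_real]
  exact hM x

end Herman

section TrigPoly

open Polynomial

/-- `g` is a trigonometric polynomial of degree at most `n`, written in the form
`A (cos x) + sin x * B (cos x)`, in which evenness is visible. -/
def IsTrigPoly (n : ℕ) (g : ℝ → ℝ) : Prop :=
  ∃ A B : ℝ[X], A.degree ≤ n ∧ B.degree + 1 ≤ n ∧
    ∀ x, g x = A.eval (cos x) + sin x * B.eval (cos x)

lemma isTrigPoly_one : IsTrigPoly 0 fun _ => 1 :=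
  ⟨1, 0, by simp, by simp, by simp⟩

namespace IsTrigPoly

variable {m n : ℕ} {g h : ℝ → ℝ}

lemma mono (hg : IsTrigPoly m g) (hmn : m ≤ n) : IsTrigPoly n g := by
  obtain ⟨A, B, hA, hB, hg⟩ := hg
  have hmn' : (m : WithBot ℕ) ≤ n := Nat.cast_le.mpr hmn
  exact ⟨A, B, hA.trans hmn', hB.trans hmn', hg⟩

lemma sub (hg : IsTrigPoly n g) (hh : IsTrigPoly n h) : IsTrigPoly n fun x => g x - h x := by
  obtain ⟨A, B, hA, hB, hg⟩ := hg
  obtain ⟨A', B', hA', hB', hh⟩ := hh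
  refine ⟨A - A', B - B', degree_sub_le_of_le hA hA' |>.trans (by simp), ?_, fun x => ?_⟩
  · calc (B - B').degree + 1 ≤ max B.degree B'.degree + 1 := by
          gcongr
          exact degree_sub_le _ _
      _ = max (B.degree + 1) (B'.degree + 1) := max_add_add_right _ _ _ |>.symm
      _ ≤ n := max_le hB hB'
  · simp only [hg, hh, eval_sub]
    ring

lemma sub_cos_mul (hg : IsTrigPoly n g) (c l b : ℝ) :
    IsTrigPoly (n + 1) fun x => (c - l * cos (x + b)) * g x := by
  obtain ⟨A, B, hA, hB, hg⟩ := hg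
  let P : ℝ[X] := C c - C (l * cos b) * X
  have hP : P.degree ≤ 1 := by
    unfold P
    compute_degree
  have hQ : (C (l * sin b) * (1 - X ^ 2) : ℝ[X]).degree ≤ 1 + 1 := by
    rw [one_add_one_eq_two]
    compute_degree
  have hC : (C (l * sin b) : ℝ[X]).degree ≤ 0 := degree_C_le
  refine ⟨P * A + C (l * sin b) * (1 - X ^ 2) * B, P * B + C (l * sin b) * A, ?_, ?_, fun x => ?_⟩
  · rw [Nat.cast_add_one, add_comm (n : WithBot ℕ)]
    refine degree_add_le_of_le (degree_mul_le_of_le hP hA) ?_ |>.trans (max_self _).le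
    calc _ ≤ 1 + 1 + B.degree := degree_mul_le_of_le hQ le_rfl
      _ = 1 + (B.degree + 1) := by rw [add_assoc, add_comm 1 B.degree]
      _ ≤ 1 + n := by gcongr
  · rw [Nat.cast_add_one]
    gcongr
    refine degree_add_le_of_le ?_ ((degree_mul_le_of_le hC hA).trans (zero_add _).le) |>.trans
      (max_self _).le
    calc (P * B).degree ≤ 1 + B.degree := degree_mul_le_of_le hP le_rfl
      _ = B.degree + 1 := add_comm _ _
      _ ≤ n := hB
  · simp only [hg, P, cos_add, eval_add, eval_sub, eval_mul, eval_C, eval_X, eval_one, eval_pow]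
    linear_combination (l * sin b * eval (cos x) B) * sin_sq_add_cos_sq x

lemma exists_eval_cos_of_even (hg : IsTrigPoly n g) (heven : ∀ x, g (-x) = g x) :
    ∃ Q : ℝ[X], Q.degree ≤ n ∧ ∀ x, g x = Q.eval (cos x) := by
  obtain ⟨A, B, hA, -, hg⟩ := hg
  refine ⟨A, hA, fun x => ?_⟩
  have hneg := heven x
  rw [hg, hg, cos_neg, sin_neg] at hneg
  rw [hg]
  linarith

end IsTrigPoly

lemma isTrigPoly_continuant (c b : ℤ → ℝ) (l : ℝ) (n : ℕ) (k : ℤ) :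
    IsTrigPoly n fun x => continuant 1 (fun i => c i - l * cos (x + b i)) n k := by
  induction n using Nat.twoStepInduction with
  | zero => exact isTrigPoly_one
  | one => simpa [continuant_one] using isTrigPoly_one.sub_cos_mul (c k) l (b k)
  | more n ih₀ ih₁ =>
    simp only [continuant_add_two, one_mul]
    exact (ih₁.sub_cos_mul _ _ _).sub (ih₀.mono (by omega))

/-- Reversing the block changes the sign of the phase measured from its midpoint, so the continuant
is an even function of that phase. -/
lemma exists_continuant_eq_eval_cos (E l a : ℝ) (n : ℕ) : ∃ Q : ℝ[X], Q.degree ≤ n ∧ ∀ x,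
    continuant 1 (fun i => E - l * cos (x + i * a)) n 0 = Q.eval (cos (x + (n - 1) / 2 * a)) := by
  let b (i : ℤ) : ℝ := (i - (n - 1) / 2) * a
  have heven (x : ℝ) : continuant 1 (fun i => E - l * cos (-x + b i)) n 0 =
      continuant 1 (fun i => E - l * cos (x + b i)) n 0 := by
    have hrev := continuant_reflect 1 (fun i => E - l * cos (x + b i)) n (n - 1) 0
    rw [show (n : ℤ) - 1 - 0 - n + 1 = 0 by ring] at hrev
    rw [← hrev]
    congr 1 with i
    rw [← cos_neg]
    simp only [b]
    push_cast
    ring_nf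
  obtain ⟨Q, hdeg, hQ⟩ := (isTrigPoly_continuant (fun _ => E) b l n 0).exists_eval_cos_of_even heven
  refine ⟨Q, hdeg, fun x => ?_⟩
  rw [← hQ]
  congr 1 with i
  simp only [b]
  ring_nf

end TrigPoly

section SineSums

lemma sum_Ico_add_natCast {M : Type*} [AddCommMonoid M] (f : ℤ → M) (a : ℤ) (N : ℕ) :
    ∑ i ∈ Finset.Ico a (a + N), f i = ∑ l ∈ Finset.range N, f (a + l) := by
  refine (Finset.sum_nbij (fun l : ℕ => a + l) ?_ ?_ ?_ fun _ _ => rfl).symm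
  · intro l hl
    simp only [Finset.mem_range, Finset.mem_Ico] at hl ⊢
    omega
  · exact fun _ _ _ _ h => by simpa using h
  · intro i hi
    simp only [Finset.coe_Ico, Set.mem_Ico] at hi
    exact ⟨(i - a).toNat, by simp only [Finset.coe_range, Set.mem_Iio]; omega, by simp only; omega⟩

lemma abs_sum_cos_mul_abs_sin_le_one (x β : ℝ) (a : ℤ) (N : ℕ) :
    |∑ i ∈ Finset.Ico a (a + N), cos (2 * π * (x + i * β))| * |sin (π * β)| ≤ 1 := by
  let S (i : ℤ) : ℝ := sin (2 * π * (x + i * β) - π * β)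
  have telescope : 2 * ((∑ i ∈ Finset.Ico a (a + N), cos (2 * π * (x + i * β))) * sin (π * β)) =
      S (a + N) - S a := by
    have hsum := Finset.sum_range_sub (fun l : ℕ => S (a + l)) N
    rw [Nat.cast_zero, add_zero] at hsum
    rw [sum_Ico_add_natCast, ← hsum, Finset.sum_mul, Finset.mul_sum]
    refine Finset.sum_congr rfl fun l _ => ?_
    have hnext : S (a + (l + 1 : ℕ)) = sin (2 * π * (x + (a + l : ℤ) * β) + π * β) := by
      simp only [S]
      push_cast
      ring_nf
    rw [hnext, sin_add]
    simp only [S, sin_sub]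
    ring
  have abs_le_two : |S (a + N) - S a| ≤ 1 + 1 :=
    (abs_sub _ _).trans (add_le_add (abs_sin_le_one _) (abs_sin_le_one _))
  rw [← telescope, abs_mul, abs_two, abs_mul] at abs_le_two
  linarith

/-- The smoothing `|1 - r e ^ (2πix)|²` of `4 sin² (πx)`, which is its value at `r = 1`. -/
def smoothedSine (r x : ℝ) : ℝ := (1 - r) ^ 2 + 4 * r * sin (π * x) ^ 2

lemma hasSum_log_smoothedSine {r : ℝ} (hr₀ : 0 ≤ r) (hr₁ : r < 1) (x : ℝ) :
    HasSum (fun k : ℕ => -(2 * (r ^ k / k * cos (2 * π * (k * x))))) (log (smoothedSine r x)) := by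
  let z : ℂ := r * Complex.exp ((2 * π * x : ℝ) * Complex.I)
  have norm_z : ‖z‖ = r := by
    rw [norm_mul, Complex.norm_exp_ofReal_mul_I, mul_one, Complex.norm_real, norm_of_nonneg hr₀]
  have smoothedSine_eq : smoothedSine r x = ‖1 - z‖ ^ 2 := by
    rw [← Complex.normSq_eq_norm_sq, Complex.normSq_apply]
    simp only [z, smoothedSine, Complex.sub_re, Complex.sub_im, Complex.one_re, Complex.one_im,
      Complex.re_ofReal_mul, Complex.im_ofReal_mul, Complex.exp_ofReal_mul_I_re,
      Complex.exp_ofReal_mul_I_im]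
    rw [sin_sq_eq_half_sub (π * x), ← mul_assoc]
    linear_combination (-r ^ 2) * cos_sq_add_sin_sq (2 * π * x)
  have hlog : log (smoothedSine r x) = -(2 * (-Complex.log (1 - z)).re) := by
    rw [smoothedSine_eq, log_pow, Complex.neg_re, Complex.log_re]
    push_cast
    ring
  have term_eq (k : ℕ) : r ^ k / k * cos (2 * π * (k * x)) = (z ^ k / k).re := by
    have hexp : z ^ k = (r ^ k : ℝ) * Complex.exp ((2 * π * (k * x) : ℝ) * Complex.I) := by
      rw [mul_pow, ← Complex.exp_nat_mul, Complex.ofReal_pow]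
      push_cast
      ring_nf
    rw [hexp, Complex.div_natCast_re, Complex.re_ofReal_mul, Complex.exp_ofReal_mul_I_re]
    ring
  simp only [hlog, term_eq]
  have htaylor := Complex.hasSum_taylorSeries_neg_log (z := z) (by rwa [norm_z])
  exact ((Complex.hasSum_re htaylor).mul_left 2).neg

end SineSums

/-- The Diophantine condition in the form in which it enters the estimates: through the chord
lengths `|sin (πkα)|` in place of the distances `‖kα‖`, and with an integer exponent. -/
structure SineDiophantine (α τ : ℝ) (d : ℕ) : Prop where
  pos : 0 < τ
  one_le : 1 ≤ d
  le_mul : ∀ k : ℤ, k ≠ 0 → τ ≤ |(k : ℝ)| ^ d * |sin (π * (k * α))|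

lemma distToInt_le_abs_sin (x : ℝ) : distToInt x ≤ |sin (π * x)| := by
  have hsin : |sin (π * x)| = |sin (π * (x - round x))| := by
    rw [mul_sub, mul_comm π (round x : ℝ), sin_sub_int_mul_pi, abs_mul, abs_neg_one_zpow, one_mul]
  have hround : |π * (x - round x)| ≤ π / 2 := by
    rw [abs_mul, abs_of_pos pi_pos]
    nlinarith [abs_sub_round x, pi_pos]
  calc distToInt x ≤ 2 * |x - round x| := by
        rw [distToInt]
        linarith [abs_nonneg (x - round x)]
    _ = 2 / π * |π * (x - round x)| := by
        rw [abs_mul, abs_of_pos pi_pos]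
        field_simp
    _ ≤ |sin (π * x)| := by
        rw [hsin]
        exact mul_abs_le_abs_sin hround

lemma IsDiophantine.exists_sineDiophantine {α : ℝ} (hα : IsDiophantine α) :
    ∃ τ d, SineDiophantine α τ d := by
  obtain ⟨κ, τ, -, hτ, hα⟩ := hα
  refine ⟨τ, max 1 ⌈κ⌉₊, hτ, le_max_left _ _, fun k hk => ?_⟩
  have one_le_abs : 1 ≤ |(k : ℝ)| := by exact_mod_cast Int.one_le_abs hk
  have hpow : |(k : ℝ)| ^ κ ≤ |(k : ℝ)| ^ max 1 ⌈κ⌉₊ := by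
    rw [← rpow_natCast]
    exact rpow_le_rpow_of_exponent_le one_le_abs
      ((Nat.le_ceil κ).trans (Nat.cast_le.mpr (le_max_right _ _)))
  calc τ ≤ |(k : ℝ)| ^ κ * distToInt (k * α) := by
        rw [← div_le_iff₀' (by positivity)]
        exact hα k hk
    _ ≤ |(k : ℝ)| ^ max 1 ⌈κ⌉₊ * |sin (π * (k * α))| := by
        gcongr
        · exact abs_nonneg _
        · exact distToInt_le_abs_sin _

/-- Divide and conquer: each doubling of the interval adds only one large term to the sum, and
`√N` is summable along the doublings. -/
lemma exists_sum_Ico_sub_le {u : ℤ → ℝ} {c : ℝ} (hc : 0 ≤ c)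
    (hu : ∀ i j : ℤ, i < j → u i ≤ c * √(j - i) ∨ u j ≤ c * √(j - i)) {N : ℕ} (hN : 1 ≤ N) (a : ℤ) :
    ∃ i₀ ∈ Finset.Ico a (a + N),
      ∑ i ∈ Finset.Ico a (a + N), u i - u i₀ ≤ 4 * c * (N - √N) := by
  induction N using Nat.strong_induction_on generalizing a with
  | _ N ih =>
  obtain rfl | hN₂ : N = 1 ∨ 2 ≤ N := by omega
  · refine ⟨a, by simp, ?_⟩
    rw [sum_Ico_add_natCast]
    simp
  obtain ⟨N₁, N₂, rfl, h₁, h₂⟩ : ∃ N₁ N₂, N = N₁ + N₂ ∧ N ≤ 3 * N₁ ∧ N ≤ 3 * N₂ :=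
    ⟨N / 2, N - N / 2, by omega, by omega, by omega⟩
  obtain ⟨i, hi, sum₁⟩ := ih N₁ (by omega) (by omega) a
  obtain ⟨j, hj, sum₂⟩ := ih N₂ (by omega) (by omega) (a + N₁)
  rw [Finset.mem_Ico] at hi hj
  have hsum : ∑ i ∈ Finset.Ico a (a + (N₁ + N₂ : ℕ)), u i =
      ∑ i ∈ Finset.Ico a (a + N₁), u i + ∑ i ∈ Finset.Ico (a + N₁) (a + N₁ + N₂), u i := by
    rw [sum_Ico_add_natCast, sum_Ico_add_natCast, sum_Ico_add_natCast, Finset.sum_range_add]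
    simp only [Nat.cast_add, add_assoc]
  have hsqrt : 5 / 4 * √(N₁ + N₂ : ℕ) ≤ √N₁ + √N₂ := by
    have hprod : ((N₁ + N₂ : ℕ) : ℝ) / 3 ≤ √N₁ * √N₂ := by
      have h₁' : ((N₁ + N₂ : ℕ) : ℝ) ≤ 3 * N₁ := by exact_mod_cast h₁
      have h₂' : ((N₁ + N₂ : ℕ) : ℝ) ≤ 3 * N₂ := by exact_mod_cast h₂
      rw [← sqrt_mul (by positivity)]
      apply le_sqrt_of_sq_le
      nlinarith
    refine le_of_sq_le_sq ?_ (by positivity)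
    have := sq_sqrt (Nat.cast_nonneg (α := ℝ) N₁)
    have := sq_sqrt (Nat.cast_nonneg (α := ℝ) N₂)
    have := sq_sqrt (Nat.cast_nonneg (α := ℝ) (N₁ + N₂))
    push_cast at *
    nlinarith
  have hdist : c * √(j - i) ≤ c * √(N₁ + N₂ : ℕ) := by
    have : (j : ℝ) - i ≤ (N₁ + N₂ : ℕ) := by exact_mod_cast (by omega : j - i ≤ (N₁ + N₂ : ℕ))
    gcongr
  have hmerge : 4 * c * (N₁ - √N₁) + 4 * c * (N₂ - √N₂) + c * √(N₁ + N₂ : ℕ) ≤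
      4 * c * ((N₁ + N₂ : ℕ) - √(N₁ + N₂ : ℕ)) := by
    push_cast at *
    linear_combination 4 * c * hsqrt
  rcases hu i j (by omega) with hsmall | hsmall
  · exact ⟨j, by rw [Finset.mem_Ico]; omega, by linarith⟩
  · exact ⟨i, by rw [Finset.mem_Ico]; omega, by linarith⟩

/-- The amount by which the logarithm of a smoothed sine exceeds that of the sine itself. -/
def sineDefect (ρ x : ℝ) : ℝ := log (1 + ρ / sin (π * x) ^ 2)

lemma sineDefect_nonneg {ρ : ℝ} (hρ : 0 ≤ ρ) (x : ℝ) : 0 ≤ sineDefect ρ x :=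
  log_nonneg (le_add_of_nonneg_right (by positivity))

lemma sineDefect_le_of_le_abs_sin {ρ s x : ℝ} (hρ : 0 ≤ ρ) (hs : 0 < s)
    (hx : s ≤ |sin (π * x)|) : sineDefect ρ x ≤ log (1 + ρ / s ^ 2) := by
  rw [sineDefect, ← sq_abs (sin (π * x))]
  exact log_le_log (by positivity) (by gcongr)

namespace SineDiophantine

variable {α τ : ℝ} {d : ℕ}

lemma exists_abs_sum_log_smoothedSine_le (h : SineDiophantine α τ d) {r : ℝ} (hr₀ : 0 ≤ r)
    (hr₁ : r < 1) : ∃ C, ∀ (t : ℝ) (a : ℤ) (N : ℕ),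
      |∑ i ∈ Finset.Ico a (a + N), log (smoothedSine r (t + i * α))| ≤ C := by
  have hgeom : Summable fun k : ℕ => (k : ℝ) ^ d * r ^ k :=
    summable_pow_mul_geometric_of_norm_lt_one d (by rwa [norm_of_nonneg hr₀])
  have hsummable := (hgeom.div_const τ).mul_left 2
  refine ⟨∑' k : ℕ, 2 * ((k : ℝ) ^ d * r ^ k / τ), fun t a N => ?_⟩
  have hseries := hasSum_sum (s := Finset.Ico a (a + N))
    fun i _ => hasSum_log_smoothedSine hr₀ hr₁ (t + i * α)
  rw [← hseries.tsum_eq, ← norm_eq_abs]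
  refine tsum_of_norm_bounded hsummable.hasSum fun k => ?_
  have hτ := h.pos
  rcases eq_or_ne k 0 with rfl | hk
  · simp only [Nat.cast_zero, div_zero, zero_mul, mul_zero, neg_zero, Finset.sum_const_zero,
      norm_zero]
    positivity
  have hcos := abs_sum_cos_mul_abs_sin_le_one (k * t) (k * α) a N
  set S := ∑ i ∈ Finset.Ico a (a + N), cos (2 * π * (k * t + i * (k * α)))
  have sum_eq : ∑ i ∈ Finset.Ico a (a + N), -(2 * (r ^ k / k * cos (2 * π * (k * (t + i * α))))) =
      -(2 * (r ^ k / k * S)) := by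
    rw [Finset.sum_neg_distrib, ← Finset.mul_sum, ← Finset.mul_sum]
    congr! 5
    ring
  have abs_S_le : |S| ≤ (k : ℝ) ^ d / τ := by
    have hsin := h.le_mul k (by exact_mod_cast hk)
    rw [Int.cast_natCast, Nat.abs_cast] at hsin
    rw [le_div_iff₀ hτ]
    calc |S| * τ ≤ |S| * ((k : ℝ) ^ d * |sin (π * (k * α))|) := by gcongr
      _ = k ^ d * (|S| * |sin (π * (k * α))|) := by ring
      _ ≤ k ^ d := mul_le_of_le_one_right (by positivity) hcos
  have one_le_k : (1 : ℝ) ≤ k := by exact_mod_cast Nat.one_le_iff_ne_zero.mpr hk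
  calc ‖∑ i ∈ Finset.Ico a (a + N), -(2 * (r ^ k / k * cos (2 * π * (k * (t + i * α)))))‖
      = 2 * (r ^ k / k * |S|) := by
        rw [sum_eq, norm_neg, norm_eq_abs, abs_mul, abs_mul, abs_two, abs_of_nonneg (by positivity)]
    _ ≤ 2 * (r ^ k * (k ^ d / τ)) := by
        gcongr
        exact div_le_self (by positivity) one_le_k
    _ = 2 * (k ^ d * r ^ k / τ) := by ring

lemma le_abs_sin_or_le_abs_sin (h : SineDiophantine α τ d) (t : ℝ) {i j : ℤ} (hij : i < j) :
    τ / (2 * (j - i : ℝ) ^ d) ≤ |sin (π * (t + i * α))| ∨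
      τ / (2 * (j - i : ℝ) ^ d) ≤ |sin (π * (t + j * α))| := by
  have hgap : (0 : ℝ) < j - i := sub_pos.mpr (by exact_mod_cast hij)
  have hsub : |sin (π * ((j - i : ℤ) * α))| ≤
      |sin (π * (t + i * α))| + |sin (π * (t + j * α))| := by
    rw [show π * ((j - i : ℤ) * α) = π * (t + j * α) - π * (t + i * α) by push_cast; ring, sin_sub,
      add_comm |sin (π * (t + i * α))|]
    refine (abs_sub _ _).trans (add_le_add ?_ ?_) <;> rw [abs_mul]
    · exact mul_le_of_le_one_right (abs_nonneg _) (abs_cos_le_one _)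
    · exact mul_le_of_le_one_left (abs_nonneg _) (abs_cos_le_one _)
  have hτ : τ ≤ (j - i : ℝ) ^ d * (|sin (π * (t + i * α))| + |sin (π * (t + j * α))|) := by
    have hle := h.le_mul (j - i) (by omega)
    push_cast at hle hsub
    rw [abs_of_pos hgap] at hle
    exact hle.trans (by gcongr)
  simp only [div_le_iff₀' (show 0 < 2 * (j - i : ℝ) ^ d by positivity)]
  by_contra! hlt
  linarith [hlt.1, hlt.2]

lemma sineDefect_le_sqrt (h : SineDiophantine α τ d) {w ρ : ℝ} (hw : 0 ≤ w) (hρ : 0 ≤ ρ)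
    (hρw : ρ ≤ (w ^ (2 * d) * τ / 2) ^ 2) {g x : ℝ} (hg : 0 < g)
    (hx : τ / (2 * g ^ d) ≤ |sin (π * x)|) : sineDefect ρ x ≤ 4 * d * w * √g := by
  have hτ := h.pos
  have hd := h.one_le
  have hratio : ρ / (τ / (2 * g ^ d)) ^ 2 ≤ (w * √g) ^ (4 * d) := by
    have hpow : √g ^ (4 * d) = (g ^ d) ^ 2 := by
      rw [show 4 * d = 2 * (d * 2) by ring, pow_mul, sq_sqrt hg.le, pow_mul]
    rw [div_le_iff₀ (by positivity), mul_pow, hpow]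
    refine hρw.trans_eq ?_
    field_simp
    ring
  have hbern : 1 + (w * √g) ^ (4 * d) ≤ (1 + w * √g) ^ (4 * d) := by
    simpa using pow_add_pow_le zero_le_one (by positivity : 0 ≤ w * √g) (by omega : 4 * d ≠ 0)
  calc sineDefect ρ x ≤ log (1 + ρ / (τ / (2 * g ^ d)) ^ 2) :=
        sineDefect_le_of_le_abs_sin hρ (by positivity) hx
    _ ≤ log ((1 + w * √g) ^ (4 * d)) := log_le_log (by positivity) (by linarith)
    _ = 4 * d * log (1 + w * √g) := by
        rw [log_pow]
        push_cast
        ring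
    _ ≤ 4 * d * (w * √g) := by
        gcongr
        linarith [log_le_sub_one_of_pos (by positivity : 0 < 1 + w * √g)]
    _ = 4 * d * w * √g := by ring

end SineDiophantine

section ChordProducts

lemma sum_erase_le_sum_sub_add {ι : Type*} [DecidableEq ι] {S : Finset ι} {f : ι → ℝ} {B : ℝ}
    {i₀ j : ι} (hf : ∀ i ∈ S, 0 ≤ f i) (hB : 0 ≤ B) (hi₀ : i₀ ∈ S)
    (hle : ∀ i ∈ S.erase j, f i ≤ B) : ∑ i ∈ S.erase j, f i ≤ ∑ i ∈ S, f i - f i₀ + B := by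
  rw [← Finset.sum_erase_eq_sub hi₀]
  by_cases hmem : i₀ ∈ S.erase j
  · rw [← Finset.sum_erase_add _ _ hmem]
    refine add_le_add (Finset.sum_le_sum_of_subset_of_nonneg ?_ ?_) (hle i₀ hmem)
    · exact Finset.erase_subset_erase _ (Finset.erase_subset _ _)
    · exact fun i hi _ => hf i (Finset.mem_of_mem_erase hi)
  · obtain rfl : i₀ = j := by_contra fun hne => hmem (Finset.mem_erase.mpr ⟨hne, hi₀⟩)
    exact le_add_of_nonneg_right hB

lemma exists_neg_log_le_and_sq_div_le {η ρ₀ : ℝ} (hη : 0 < η) (hρ₀ : 0 < ρ₀) :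
    ∃ r, 0 < r ∧ r < 1 ∧ -log r ≤ η ∧ (1 - r) ^ 2 / (4 * r) ≤ ρ₀ := by
  have hlog : ∀ᶠ r in nhds (1 : ℝ), -log r < η :=
    (continuousAt_log one_ne_zero).neg.eventually_lt_const (by simpa using hη)
  have hquot : ∀ᶠ r in nhds (1 : ℝ), (1 - r) ^ 2 / (4 * r) < ρ₀ := by
    have hcont : ContinuousAt (fun r : ℝ => (1 - r) ^ 2 / (4 * r)) 1 :=
      ContinuousAt.div (by fun_prop) (by fun_prop) (by norm_num)
    exact hcont.eventually_lt_const (by simpa using hρ₀)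
  have hleft : ∀ᶠ r in nhdsWithin (1 : ℝ) (Set.Iio 1),
      0 < r ∧ r < 1 ∧ -log r < η ∧ (1 - r) ^ 2 / (4 * r) < ρ₀ := by
    filter_upwards [nhdsWithin_le_nhds (eventually_gt_nhds one_pos), self_mem_nhdsWithin,
      nhdsWithin_le_nhds hlog, nhdsWithin_le_nhds hquot] with r h₀ h₁ h₂ h₃
    exact ⟨h₀, h₁, h₂, h₃⟩
  obtain ⟨r, hr₀, hr₁, hr₂, hr₃⟩ := hleft.exists
  exact ⟨r, hr₀, hr₁, hr₂.le, hr₃.le⟩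

lemma abs_log_smoothedSine_le {r : ℝ} (hr₀ : 0 ≤ r) (hr₁ : r < 1) (x : ℝ) :
    |log (smoothedSine r x)| ≤ log 4 - log ((1 - r) ^ 2) := by
  have hpos : 0 < (1 - r) ^ 2 := pow_pos (sub_pos.mpr hr₁) 2
  have lower : (1 - r) ^ 2 ≤ smoothedSine r x := le_add_of_nonneg_right (by positivity)
  have upper : smoothedSine r x ≤ 4 := by
    rw [smoothedSine]
    nlinarith [sin_sq_le_one (π * x)]
  have log_lower := log_le_log hpos lower
  have log_upper := log_le_log (hpos.trans_le lower) upper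
  have hlog : log ((1 - r) ^ 2) ≤ 0 := log_nonpos hpos.le (by nlinarith)
  have hlog₄ : 0 ≤ log (4 : ℝ) := log_nonneg (by norm_num)
  exact abs_le.mpr ⟨by linarith, by linarith⟩

lemma log_four_mul_sin_sq {r x : ℝ} (hr : 0 < r) (hx : sin (π * x) ≠ 0) :
    log (4 * sin (π * x) ^ 2) =
      log (smoothedSine r x) - log r - sineDefect ((1 - r) ^ 2 / (4 * r)) x := by
  have hdefect : 0 < 1 + (1 - r) ^ 2 / (4 * r) / sin (π * x) ^ 2 := by positivity
  have hsplit : smoothedSine r x =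
      r * (4 * sin (π * x) ^ 2) * (1 + (1 - r) ^ 2 / (4 * r) / sin (π * x) ^ 2) := by
    rw [smoothedSine]
    field_simp
    ring
  rw [hsplit, log_mul (by positivity) hdefect.ne', log_mul hr.ne' (by positivity), sineDefect]
  ring

/-- The product of the squared chord lengths `|1 - e ^ (2πi(t + lα))|²` over `l ∈ S`. The numerator
and the denominator of a squared Lagrange basis polynomial with cosine nodes are products of two
such. -/
def chordProd (α t : ℝ) (S : Finset ℤ) : ℝ := ∏ i ∈ S, 4 * sin (π * (t + i * α)) ^ 2

lemma chordProd_nonneg (α t : ℝ) (S : Finset ℤ) : 0 ≤ chordProd α t S :=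
  Finset.prod_nonneg fun _ _ => by positivity

lemma chordProd_union (α t : ℝ) {S T : Finset ℤ} (h : Disjoint S T) :
    chordProd α t (S ∪ T) = chordProd α t S * chordProd α t T := Finset.prod_union h

lemma chordProd_eq_exp {α t r : ℝ} {S : Finset ℤ} (hr : 0 < r)
    (hS : ∀ i ∈ S, sin (π * (t + i * α)) ≠ 0) :
    chordProd α t S = exp (∑ i ∈ S, log (smoothedSine r (t + i * α)) - S.card * log r -
      ∑ i ∈ S, sineDefect ((1 - r) ^ 2 / (4 * r)) (t + i * α)) := by
  rw [← nsmul_eq_mul, ← Finset.sum_const, ← Finset.sum_sub_distrib, ← Finset.sum_sub_distrib,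
    exp_sum]
  refine Finset.prod_congr rfl fun i hi => ?_
  have hsin := hS i hi
  rw [← log_four_mul_sin_sq hr hsin, exp_log (by positivity)]

namespace SineDiophantine

variable {α τ : ℝ} {d : ℕ}

lemma exists_sum_erase_sineDefect_le (h : SineDiophantine α τ d) {η : ℝ} (hη : 0 < η) :
    ∃ ρ₀ > 0, ∀ ρ, 0 ≤ ρ → ρ ≤ ρ₀ → ∀ (t : ℝ) (a : ℤ) (N : ℕ) (j : ℤ) (s : ℝ), 0 < s →
      (∀ i ∈ (Finset.Ico a (a + N)).erase j, s ≤ |sin (π * (t + i * α))|) →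
      ∑ i ∈ (Finset.Ico a (a + N)).erase j, sineDefect ρ (t + i * α) ≤
        η * N + log (1 + ρ / s ^ 2) := by
  have hτ := h.pos
  have hd : (0 : ℝ) < d := by exact_mod_cast h.one_le
  let w := η / (16 * d)
  have hw : 4 * (4 * d * w) = η := by
    simp only [w]
    field_simp
    norm_num
  refine ⟨(w ^ (2 * d) * τ / 2) ^ 2, by positivity, fun ρ hρ hρw t a N j s hs hsin => ?_⟩
  have hlog : 0 ≤ log (1 + ρ / s ^ 2) := log_nonneg (le_add_of_nonneg_right (by positivity))
  have hpair : ∀ i j : ℤ, i < j → sineDefect ρ (t + i * α) ≤ 4 * d * w * √(j - i) ∨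
      sineDefect ρ (t + j * α) ≤ 4 * d * w * √(j - i) := fun i j hij =>
    (h.le_abs_sin_or_le_abs_sin t hij).imp
      (h.sineDefect_le_sqrt (by positivity) hρ hρw (sub_pos.mpr (by exact_mod_cast hij)))
      (h.sineDefect_le_sqrt (by positivity) hρ hρw (sub_pos.mpr (by exact_mod_cast hij)))
  rcases Nat.eq_zero_or_pos N with rfl | hN
  · simpa using hlog
  obtain ⟨i₀, hi₀, hsum⟩ := exists_sum_Ico_sub_le (by positivity) hpair hN a
  calc ∑ i ∈ (Finset.Ico a (a + N)).erase j, sineDefect ρ (t + i * α)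
      ≤ ∑ i ∈ Finset.Ico a (a + N), sineDefect ρ (t + i * α) - sineDefect ρ (t + i₀ * α) +
          log (1 + ρ / s ^ 2) :=
        sum_erase_le_sum_sub_add (fun i _ => sineDefect_nonneg hρ _) hlog hi₀
          fun i hi => sineDefect_le_of_le_abs_sin hρ hs (hsin i hi)
    _ ≤ η * (N - √N) + log (1 + ρ / s ^ 2) := by
        rw [← hw]
        gcongr
    _ ≤ η * N + log (1 + ρ / s ^ 2) := by
        gcongr
        exact sub_le_self _ (sqrt_nonneg _)

lemma exists_abs_sum_erase_log_smoothedSine_le (h : SineDiophantine α τ d) {r : ℝ} (hr₀ : 0 ≤ r)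
    (hr₁ : r < 1) : ∃ C, ∀ (t : ℝ) (a : ℤ) (N : ℕ) (j : ℤ),
      |∑ i ∈ (Finset.Ico a (a + N)).erase j, log (smoothedSine r (t + i * α))| ≤ C := by
  obtain ⟨C, hC⟩ := h.exists_abs_sum_log_smoothedSine_le hr₀ hr₁
  refine ⟨C + (log 4 - log ((1 - r) ^ 2)), fun t a N j => ?_⟩
  have hterm := abs_log_smoothedSine_le hr₀ hr₁ (t + j * α)
  have hsum := hC t a N
  by_cases hj : j ∈ Finset.Ico a (a + N)
  · rw [Finset.sum_erase_eq_sub hj]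
    exact (abs_sub _ _).trans (add_le_add hsum hterm)
  · rw [Finset.erase_eq_of_notMem hj]
    linarith [abs_nonneg (log (smoothedSine r (t + j * α)))]

lemma exists_chordProd_erase_le (h : SineDiophantine α τ d) {ε : ℝ} (hε : 0 < ε) :
    ∃ C, ∀ (t : ℝ) (a : ℤ) (N : ℕ) (j : ℤ),
      chordProd α t ((Finset.Ico a (a + N)).erase j) ≤ exp (ε * N + C) := by
  obtain ⟨r, hr₀, hr₁, hr, -⟩ := exists_neg_log_le_and_sq_div_le hε one_pos
  obtain ⟨C, hC⟩ := h.exists_abs_sum_erase_log_smoothedSine_le hr₀.le hr₁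
  refine ⟨C, fun t a N j => ?_⟩
  set S := (Finset.Ico a (a + N)).erase j
  by_cases hS : ∀ i ∈ S, sin (π * (t + i * α)) ≠ 0
  · have hsum := (abs_le.mp (hC t a N j)).2
    have hcard : (S.card : ℝ) ≤ N := by
      exact_mod_cast (Finset.card_erase_le).trans_eq (by simp)
    have hdefect : 0 ≤ ∑ i ∈ S, sineDefect ((1 - r) ^ 2 / (4 * r)) (t + i * α) :=
      Finset.sum_nonneg fun i _ => sineDefect_nonneg (by positivity) _
    rw [chordProd_eq_exp hr₀ hS, exp_le_exp]
    nlinarith [mul_le_mul hcard hr (neg_nonneg.mpr (log_nonpos hr₀.le hr₁.le)) N.cast_nonneg]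
  · push Not at hS
    obtain ⟨i, hi, hsin⟩ := hS
    rw [chordProd, Finset.prod_eq_zero hi (by rw [hsin]; ring)]
    positivity

lemma exists_le_chordProd_erase (h : SineDiophantine α τ d) {ε : ℝ} (hε : 0 < ε) :
    ∃ C, ∀ (t : ℝ) (a : ℤ) (N : ℕ) (j : ℤ) (s : ℝ), 0 < s → s ≤ 1 →
      (∀ i ∈ (Finset.Ico a (a + N)).erase j, s ≤ |sin (π * (t + i * α))|) →
      exp (-(ε * N + C)) * s ^ 2 ≤ chordProd α t ((Finset.Ico a (a + N)).erase j) := by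
  obtain ⟨ρ₀, hρ₀, hdefect⟩ := h.exists_sum_erase_sineDefect_le hε
  obtain ⟨r, hr₀, hr₁, -, hr⟩ := exists_neg_log_le_and_sq_div_le one_pos (lt_min hρ₀ one_pos)
  obtain ⟨C, hC⟩ := h.exists_abs_sum_erase_log_smoothedSine_le hr₀.le hr₁
  refine ⟨C + log 2, fun t a N j s hs₀ hs₁ hs => ?_⟩
  set S := (Finset.Ico a (a + N)).erase j
  set ρ := (1 - r) ^ 2 / (4 * r)
  have hρ : 0 ≤ ρ := by positivity
  have hnonzero : ∀ i ∈ S, sin (π * (t + i * α)) ≠ 0 :=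
    fun i hi => abs_pos.mp (hs₀.trans_le (hs i hi))
  have hlog : log (1 + ρ / s ^ 2) ≤ log 2 - log (s ^ 2) := by
    rw [← log_div two_ne_zero (by positivity)]
    refine log_le_log (by positivity) ?_
    rw [le_div_iff₀ (by positivity), add_mul, div_mul_cancel₀ _ (by positivity)]
    linarith [pow_le_one₀ (n := 2) hs₀.le hs₁, hr.trans (min_le_right _ _)]
  have hsum := (abs_le.mp (hC t a N j)).1
  have hcard : S.card * log r ≤ 0 :=
    mul_nonpos_of_nonneg_of_nonpos S.card.cast_nonneg (log_nonpos hr₀.le hr₁.le)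
  have hdefect := hdefect ρ hρ (hr.trans (min_le_left _ _)) t a N j s hs₀ hs
  rw [chordProd_eq_exp hr₀ hnonzero, ← exp_log (pow_pos hs₀ 2), ← exp_add, exp_le_exp]
  linarith

end SineDiophantine

/-- The union of two integer intervals, given by their left endpoints and their lengths; the
interpolation nodes are indexed by such a union. -/
def blockPair (a b : ℤ) (N M : ℕ) : Finset ℤ := Finset.Ico a (a + N) ∪ Finset.Ico b (b + M)

lemma chordProd_blockPair_erase (α t : ℝ) {a b : ℤ} {N M : ℕ}
    (hab : Disjoint (Finset.Ico a (a + N)) (Finset.Ico b (b + M))) (j : ℤ) :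
    chordProd α t ((blockPair a b N M).erase j) =
      chordProd α t ((Finset.Ico a (a + N)).erase j) *
        chordProd α t ((Finset.Ico b (b + M)).erase j) := by
  rw [blockPair, Finset.erase_union_distrib]
  exact chordProd_union α t
    (hab.mono (Finset.erase_subset _ _) (Finset.erase_subset _ _))

namespace SineDiophantine

variable {α τ : ℝ} {d : ℕ}

lemma exists_chordProd_blockPair_erase_le (h : SineDiophantine α τ d) {ε : ℝ} (hε : 0 < ε) :
    ∃ C, ∀ (t : ℝ) (n : ℕ) (a b : ℤ) (N M : ℕ), N ≤ n → M ≤ n →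
      Disjoint (Finset.Ico a (a + N)) (Finset.Ico b (b + M)) → ∀ j : ℤ,
        chordProd α t ((blockPair a b N M).erase j) ≤ exp (ε * n + C) := by
  obtain ⟨C, hC⟩ := h.exists_chordProd_erase_le (half_pos hε)
  refine ⟨2 * C, fun t n a b N M hN hM hab j => ?_⟩
  rw [chordProd_blockPair_erase α t hab]
  calc _ ≤ exp (ε / 2 * n + C) * exp (ε / 2 * n + C) := by
        refine mul_le_mul ((hC t a N j).trans ?_) ((hC t b M j).trans ?_)
          (chordProd_nonneg _ _ _) (exp_pos _).le <;> gcongr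
    _ = exp (ε * n + 2 * C) := by
        rw [← exp_add]
        ring_nf

lemma exists_le_chordProd_blockPair_erase (h : SineDiophantine α τ d) {ε : ℝ} (hε : 0 < ε) :
    ∃ C, ∀ (t : ℝ) (n : ℕ) (a b : ℤ) (N M : ℕ), N ≤ n → M ≤ n →
      Disjoint (Finset.Ico a (a + N)) (Finset.Ico b (b + M)) → ∀ (j : ℤ) (s : ℝ), 0 < s → s ≤ 1 →
        (∀ i ∈ (blockPair a b N M).erase j, s ≤ |sin (π * (t + i * α))|) →
        exp (-(ε * n + C)) * s ^ 4 ≤ chordProd α t ((blockPair a b N M).erase j) := by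
  obtain ⟨C, hC⟩ := h.exists_le_chordProd_erase (half_pos hε)
  refine ⟨2 * C, fun t n a b N M hN hM hab j s hs₀ hs₁ hs => ?_⟩
  have hsub₁ := Finset.erase_subset_erase j (Finset.subset_union_left (s₁ := Finset.Ico a (a + N))
    (s₂ := Finset.Ico b (b + M)))
  have hsub₂ := Finset.erase_subset_erase j (Finset.subset_union_right (s₁ := Finset.Ico a (a + N))
    (s₂ := Finset.Ico b (b + M)))
  rw [chordProd_blockPair_erase α t hab]
  calc exp (-(ε * n + 2 * C)) * s ^ 4
      = exp (-(ε / 2 * n + C)) * s ^ 2 * (exp (-(ε / 2 * n + C)) * s ^ 2) := by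
        rw [show -(ε * n + 2 * C) = -(ε / 2 * n + C) + -(ε / 2 * n + C) by ring, exp_add]
        ring
    _ ≤ _ := by
        refine mul_le_mul (le_trans ?_ (hC t a N j s hs₀ hs₁ fun i hi => hs i (hsub₁ hi)))
          (le_trans ?_ (hC t b M j s hs₀ hs₁ fun i hi => hs i (hsub₂ hi)))
          (by positivity) (chordProd_nonneg _ _ _) <;> gcongr

end SineDiophantine

end ChordProducts

section Interpolation

open Polynomial

lemma exists_abs_eval_le_card_mul {ι : Type*} [DecidableEq ι] {S : Finset ι} {v : ι → ℝ}
    (hv : Set.InjOn v S) (hS : S.Nonempty) {Q : ℝ[X]} (hQ : Q.degree < S.card) {x B : ℝ}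
    (hB : ∀ i ∈ S, |(Lagrange.basis S v i).eval x| ≤ B) :
    ∃ j ∈ S, |Q.eval x| ≤ S.card * B * |Q.eval (v j)| := by
  obtain ⟨j, hj, hmax⟩ := S.exists_max_image (fun i => |Q.eval (v i)|) hS
  have eval_eq : Q.eval x = ∑ i ∈ S, Q.eval (v i) * (Lagrange.basis S v i).eval x := by
    conv_lhs => rw [Lagrange.eq_interpolate hv hQ]
    simp only [Lagrange.interpolate_apply, eval_finsetSum, eval_mul, eval_C]
  refine ⟨j, hj, ?_⟩
  calc |Q.eval x| ≤ ∑ i ∈ S, |Q.eval (v i) * (Lagrange.basis S v i).eval x| := by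
        rw [eval_eq]
        exact Finset.abs_sum_le_sum_abs _ _
    _ ≤ ∑ _i ∈ S, |Q.eval (v j)| * B := by
        refine Finset.sum_le_sum fun i hi => ?_
        rw [abs_mul]
        exact mul_le_mul (hmax i hi) (hB i hi) (abs_nonneg _) (abs_nonneg _)
    _ = S.card * B * |Q.eval (v j)| := by
        rw [Finset.sum_const, nsmul_eq_mul]
        ring

lemma sq_eval_lagrange_basis {ι : Type*} [DecidableEq ι] (S : Finset ι) (v : ι → ℝ) (j : ι)
    (x : ℝ) : (Lagrange.basis S v j).eval x ^ 2 =
      (∏ l ∈ S.erase j, (2 * (x - v l)) ^ 2) / ∏ l ∈ S.erase j, (2 * (v j - v l)) ^ 2 := by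
  rw [Lagrange.basis, eval_prod, ← Finset.prod_pow, ← Finset.prod_div_distrib]
  refine Finset.prod_congr rfl fun l _ => ?_
  rw [Lagrange.basisDivisor, ← div_pow, mul_div_mul_left _ _ two_ne_zero, eval_mul, eval_C,
    eval_sub, eval_X, eval_C, div_eq_inv_mul]

lemma sq_two_mul_cos_sub_cos (x y : ℝ) :
    (2 * (cos (2 * π * x) - cos (2 * π * y))) ^ 2 =
      4 * sin (π * (y + x)) ^ 2 * (4 * sin (π * (y - x)) ^ 2) := by
  rw [cos_sub_cos, show (2 * π * x + 2 * π * y) / 2 = π * (y + x) by ring,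
    show (2 * π * x - 2 * π * y) / 2 = -(π * (y - x)) by ring, sin_neg]
  ring

lemma prod_sq_two_mul_cos_sub_cos (α θ x : ℝ) (S : Finset ℤ) :
    ∏ l ∈ S, (2 * (cos (2 * π * x) - cos (2 * π * (θ + l * α)))) ^ 2 =
      chordProd α (θ + x) S * chordProd α (θ - x) S := by
  rw [chordProd, chordProd, ← Finset.prod_mul_distrib]
  refine Finset.prod_congr rfl fun l _ => ?_
  rw [sq_two_mul_cos_sub_cos, add_right_comm, add_sub_right_comm]

/-- Quantitative distinctness of the nodes `cos (2π(θ + jα))`, `j ∈ S`, of an interpolation: the two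
sines are, up to a factor `±2`, the factors of the difference of the nodes with indices `j`
and `l`. -/
def SineSeparated (α θ s : ℝ) (S : Finset ℤ) : Prop :=
  ∀ j ∈ S, ∀ l ∈ S, j ≠ l →
    s ≤ |sin (π * ((j - l) * α))| ∧ s ≤ |sin (π * (2 * θ + (j + l) * α))|

lemma SineSeparated.le_abs_sin_sub {α θ s : ℝ} {S : Finset ℤ} (h : SineSeparated α θ s S) {j l : ℤ}
    (hj : j ∈ S) (hl : l ∈ S.erase j) : s ≤ |sin (π * (θ - (θ + j * α) + l * α))| := by
  have hle := (h l (Finset.mem_of_mem_erase hl) j hj (Finset.ne_of_mem_erase hl)).1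
  rwa [show ((l : ℝ) - j) * α = θ - (θ + j * α) + l * α by ring] at hle

lemma SineSeparated.le_abs_sin_add {α θ s : ℝ} {S : Finset ℤ} (h : SineSeparated α θ s S) {j l : ℤ}
    (hj : j ∈ S) (hl : l ∈ S.erase j) : s ≤ |sin (π * (θ + (θ + j * α) + l * α))| := by
  have hle := (h l (Finset.mem_of_mem_erase hl) j hj (Finset.ne_of_mem_erase hl)).2
  rwa [show 2 * θ + ((l : ℝ) + j) * α = θ + (θ + j * α) + l * α by ring] at hle

lemma SineSeparated.injOn_cos {α θ s : ℝ} {S : Finset ℤ} (h : SineSeparated α θ s S) (hs : 0 < s) :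
    Set.InjOn (fun l : ℤ => cos (2 * π * (θ + l * α))) S := by
  intro j hj l hl hjl
  by_contra hne
  have hl' : l ∈ S.erase j := Finset.mem_erase.mpr ⟨Ne.symm hne, hl⟩
  have hadd := abs_pos.mp (hs.trans_le (h.le_abs_sin_add hj hl'))
  have hsub := abs_pos.mp (hs.trans_le (h.le_abs_sin_sub hj hl'))
  have hzero := sq_two_mul_cos_sub_cos (θ + j * α) (θ + l * α)
  rw [show cos (2 * π * (θ + j * α)) = cos (2 * π * (θ + l * α)) from hjl, sub_self, mul_zero,
    show θ + l * α + (θ + j * α) = θ + (θ + j * α) + l * α by ring,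
    show θ + l * α - (θ + j * α) = θ - (θ + j * α) + l * α by ring] at hzero
  have hpos : 0 < 4 * sin (π * (θ + (θ + j * α) + l * α)) ^ 2 *
    (4 * sin (π * (θ - (θ + j * α) + l * α)) ^ 2) := by positivity
  linarith

namespace SineDiophantine

variable {α τ : ℝ} {d : ℕ}

lemma exists_abs_eval_lagrange_basis_le (h : SineDiophantine α τ d) {ε : ℝ} (hε : 0 < ε) :
    ∃ C, ∀ (θ s : ℝ) (n : ℕ) (a b : ℤ) (N M : ℕ), N ≤ n → M ≤ n →
      Disjoint (Finset.Ico a (a + N)) (Finset.Ico b (b + M)) → 0 < s → s ≤ 1 →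
      SineSeparated α θ s (blockPair a b N M) → ∀ j ∈ blockPair a b N M, ∀ x,
        |(Lagrange.basis (blockPair a b N M) (fun l : ℤ => cos (2 * π * (θ + l * α))) j).eval
          (cos (2 * π * x))| ≤ exp (ε * n + C) / s ^ 4 := by
  obtain ⟨C₁, upper⟩ := h.exists_chordProd_blockPair_erase_le (half_pos hε)
  obtain ⟨C₂, lower⟩ := h.exists_le_chordProd_blockPair_erase (half_pos hε)
  refine ⟨C₁ + C₂, fun θ s n a b N M hN hM hab hs₀ hs₁ hsep j hj x => ?_⟩
  refine abs_le_of_sq_le_sq ?_ (by positivity)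
  rw [sq_eval_lagrange_basis, prod_sq_two_mul_cos_sub_cos, prod_sq_two_mul_cos_sub_cos]
  calc _ ≤ exp (ε / 2 * n + C₁) * exp (ε / 2 * n + C₁) /
        (exp (-(ε / 2 * n + C₂)) * s ^ 4 * (exp (-(ε / 2 * n + C₂)) * s ^ 4)) :=
        div_le_div₀ (by positivity)
          (mul_le_mul (upper _ n a b N M hN hM hab j) (upper _ n a b N M hN hM hab j)
            (chordProd_nonneg _ _ _) (exp_pos _).le)
          (by positivity)
          (mul_le_mul
            (lower _ n a b N M hN hM hab j s hs₀ hs₁ fun l hl => hsep.le_abs_sin_add hj hl)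
            (lower _ n a b N M hN hM hab j s hs₀ hs₁ fun l hl => hsep.le_abs_sin_sub hj hl)
            (by positivity) (chordProd_nonneg _ _ _))
    _ = (exp (ε * n + (C₁ + C₂)) / s ^ 4) ^ 2 := by
        have hsplit : exp (ε * n + (C₁ + C₂)) =
            exp (ε / 2 * n + C₁) / exp (-(ε / 2 * n + C₂)) := by
          rw [← exp_sub]
          ring_nf
        rw [hsplit, mul_mul_mul_comm, div_div, div_pow, mul_pow, ← sq, ← sq, ← sq]

lemma exists_abs_eval_cos_le (h : SineDiophantine α τ d) {ε : ℝ} (hε : 0 < ε) :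
    ∃ C, ∀ (θ s : ℝ) (n : ℕ) (a b : ℤ) (N M : ℕ), N ≤ n → M ≤ n → n + 1 ≤ N + M →
      Disjoint (Finset.Ico a (a + N)) (Finset.Ico b (b + M)) → 0 < s → s ≤ 1 →
      SineSeparated α θ s (blockPair a b N M) → ∀ Q : ℝ[X], Q.degree ≤ n → ∀ x,
        ∃ j ∈ blockPair a b N M, |Q.eval (cos (2 * π * x))| ≤
          2 * n * (exp (ε * n + C) / s ^ 4) * |Q.eval (cos (2 * π * (θ + j * α)))| := by
  obtain ⟨C, hC⟩ := h.exists_abs_eval_lagrange_basis_le hε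
  refine ⟨C, fun θ s n a b N M hN hM hNM hab hs₀ hs₁ hsep Q hQ x => ?_⟩
  have hcard : (blockPair a b N M).card = N + M := by
    rw [blockPair, Finset.card_union_of_disjoint hab]
    simp
  have hdegree : Q.degree < (blockPair a b N M).card := by
    rw [hcard]
    exact hQ.trans_lt (by exact_mod_cast hNM)
  obtain ⟨j, hj, hle⟩ := exists_abs_eval_le_card_mul (hsep.injOn_cos hs₀)
    (Finset.card_pos.mp (by omega)) hdegree
    fun j hj => hC θ s n a b N M hN hM hab hs₀ hs₁ hsep j hj x
  refine ⟨j, hj, hle.trans ?_⟩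
  have hcard_le : ((blockPair a b N M).card : ℝ) ≤ 2 * n := by
    exact_mod_cast hcard.trans_le (by omega)
  gcongr

end SineDiophantine

lemma exists_blockDet_amoPot_eq_eval_cos (lam α E : ℝ) (n : ℕ) :
    ∃ Q : ℝ[X], Q.degree ≤ n ∧ ∀ θ (j : ℤ), blockDet (amoPot lam α θ) E n j =
      Q.eval (cos (2 * π * (θ + (n - 1) / 2 * α + j * α))) := by
  obtain ⟨Q, hdegree, hQ⟩ := exists_continuant_eq_eval_cos E (2 * lam) (2 * π * α) n
  refine ⟨Q, hdegree, fun θ j => ?_⟩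
  have hpot : (fun i : ℤ => E - amoPot lam α θ (i + j)) =
      fun i : ℤ => E - 2 * lam * cos (2 * π * (θ + j * α) + i * (2 * π * α)) := by
    funext i
    rw [amoPot]
    push_cast
    ring_nf
  have hshift := continuant_add_int 1 (fun i => E - amoPot lam α θ i) n 0 j
  rw [zero_add, hpot, hQ] at hshift
  rw [blockDet, hshift]
  ring_nf

lemma SineDiophantine.exists_abs_blockDet_le {α τ : ℝ} {d : ℕ} (h : SineDiophantine α τ d) {ε : ℝ}
    (hε : 0 < ε) : ∃ C, ∀ (lam E θ s : ℝ) (n : ℕ) (a b : ℤ) (N M : ℕ), N ≤ n → M ≤ n →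
      n + 1 ≤ N + M → Disjoint (Finset.Ico a (a + N)) (Finset.Ico b (b + M)) → 0 < s → s ≤ 1 →
      SineSeparated α (θ + (n - 1) / 2 * α) s (blockPair a b N M) →
      ∀ ψ, ∃ j ∈ blockPair a b N M, |blockDet (amoPot lam α ψ) E n 0| ≤
        2 * n * (exp (ε * n + C) / s ^ 4) * |blockDet (amoPot lam α θ) E n j| := by
  obtain ⟨C, hC⟩ := h.exists_abs_eval_cos_le hε
  refine ⟨C, fun lam E θ s n a b N M hN hM hNM hab hs₀ hs₁ hsep ψ => ?_⟩
  obtain ⟨Q, hdegree, hQ⟩ := exists_blockDet_amoPot_eq_eval_cos lam α E n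
  simp only [hQ]
  exact hC _ s n a b N M hN hM hNM hab hs₀ hs₁ hsep Q hdegree _

end Interpolation

section Scale

/-- A maximiser `n ∈ [1, k]` of `u n / n + η log n` works: the logarithm keeps `n` comparable
to `k`. -/
lemma exists_forall_le_mul_div_add {u : ℕ → ℝ} {B η : ℝ} (hu : ∀ n, 0 ≤ u n)
    (huB : ∀ n : ℕ, u n ≤ n * B) (hη : 0 < η) {k : ℕ} (hk : 1 ≤ k) :
    ∃ n : ℕ, 1 ≤ n ∧ n ≤ k ∧ (k : ℝ) ≤ n * exp (B / η) ∧ ∀ a ≤ n, u a ≤ a * (u n / n) + η * n := by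
  obtain ⟨n, hn, hmax⟩ := (Finset.Icc 1 k).exists_max_image (fun n : ℕ => u n / n + η * log n)
    ⟨1, Finset.mem_Icc.mpr ⟨le_rfl, hk⟩⟩
  rw [Finset.mem_Icc] at hn
  have hn₀ : (0 : ℝ) < n := by exact_mod_cast hn.1
  have hk₀ : (0 : ℝ) < k := by exact_mod_cast hk
  refine ⟨n, hn.1, hn.2, ?_, fun a ha => ?_⟩
  · have hlog : log k ≤ log n + B / η := by
      have hnB : u n / n ≤ B := by
        rw [div_le_iff₀' hn₀]
        exact huB n
      have huk : 0 ≤ u k / k := div_nonneg (hu k) hk₀.le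
      have hmax_k := hmax k (Finset.mem_Icc.mpr ⟨hk, le_rfl⟩)
      rw [← sub_le_iff_le_add', le_div_iff₀ hη]
      linarith
    calc (k : ℝ) = exp (log k) := (exp_log hk₀).symm
      _ ≤ exp (log n + B / η) := exp_le_exp.mpr hlog
      _ = n * exp (B / η) := by rw [exp_add, exp_log hn₀]
  · rcases Nat.eq_zero_or_pos a with rfl | ha₁
    · have hu₀ := huB 0
      rw [Nat.cast_zero, zero_mul] at hu₀ ⊢
      exact hu₀.trans (by positivity)
    have ha₀ : (0 : ℝ) < a := by exact_mod_cast ha₁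
    have hmax_a := hmax a (Finset.mem_Icc.mpr ⟨ha₁, ha.trans hn.2⟩)
    have hlog : log n - log a ≤ n / a - 1 := by
      rw [← log_div hn₀.ne' ha₀.ne']
      exact log_le_sub_one_of_pos (by positivity)
    have hdiv : u a / a ≤ u n / n + η * (n / a - 1) := by nlinarith
    calc u a ≤ (u n / n + η * (n / a - 1)) * a := (div_le_iff₀ ha₀).mp hdiv
      _ = a * (u n / n) + η * n - η * a := by
          field_simp
          ring
      _ ≤ a * (u n / n) + η * n := sub_le_self _ (by positivity)

lemma blockDet_amoPot_eq (lam α θ E : ℝ) (n : ℕ) (j : ℤ) :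
    blockDet (amoPot lam α θ) E n j = blockDet (amoPot lam α (θ + j * α)) E n 0 := by
  obtain ⟨Q, -, hQ⟩ := exists_blockDet_amoPot_eq_eval_cos lam α E n
  rw [hQ, hQ, Int.cast_zero]
  ring_nf

lemma abs_amoPot_le {lam : ℝ} (hlam : 0 ≤ lam) (α θ : ℝ) (i : ℤ) :
    |amoPot lam α θ i| ≤ 2 * lam := by
  rw [amoPot, abs_mul, abs_of_nonneg (by positivity : 0 ≤ 2 * lam)]
  exact mul_le_of_le_one_right (by positivity) (abs_cos_le_one _)

lemma abs_sub_amoPot_le {lam E : ℝ} (hlam : 0 ≤ lam) (hE : |E| ≤ 2 + 2 * lam) (α θ : ℝ) (i : ℤ) :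
    |E - amoPot lam α θ i| ≤ 3 + 4 * lam - 1 := by
  linarith [abs_sub E (amoPot lam α θ i), abs_amoPot_le hlam α θ i]

/-- The supremum over all phases of the determinant of a block of length `n`; its exponential growth
in `n` measures the size of all these determinants at once. -/
def blockDetSup (lam α E : ℝ) (n : ℕ) : ℝ := ⨆ ψ, |blockDet (amoPot lam α ψ) E n 0|

section BlockDetSup

variable {lam E : ℝ}

lemma abs_blockDet_amoPot_le_pow (hlam : 0 ≤ lam) (hE : |E| ≤ 2 + 2 * lam) (α θ : ℝ) (n : ℕ)
    (j : ℤ) : |blockDet (amoPot lam α θ) E n j| ≤ (3 + 4 * lam) ^ n :=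
  abs_continuant_le (by linarith) (abs_sub_amoPot_le hlam hE α θ) n j

lemma abs_blockDet_le_blockDetSup (hlam : 0 ≤ lam) (hE : |E| ≤ 2 + 2 * lam) (α θ : ℝ) (n : ℕ)
    (j : ℤ) : |blockDet (amoPot lam α θ) E n j| ≤ blockDetSup lam α E n := by
  have hbdd : BddAbove (Set.range fun ψ => |blockDet (amoPot lam α ψ) E n 0|) :=
    ⟨(3 + 4 * lam) ^ n, Set.forall_mem_range.mpr
      fun ψ => abs_blockDet_amoPot_le_pow hlam hE α ψ n 0⟩
  rw [blockDet_amoPot_eq]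
  exact le_ciSup hbdd (θ + j * α)

lemma blockDetSup_le_pow (hlam : 0 ≤ lam) (hE : |E| ≤ 2 + 2 * lam) (α : ℝ) (n : ℕ) :
    blockDetSup lam α E n ≤ (3 + 4 * lam) ^ n :=
  ciSup_le fun ψ => abs_blockDet_amoPot_le_pow hlam hE α ψ n 0

lemma pow_le_blockDetSup (hlam : 0 ≤ lam) (hE : |E| ≤ 2 + 2 * lam) (α : ℝ) (n : ℕ) :
    lam ^ n ≤ blockDetSup lam α E n := by
  refine pow_le_of_forall_abs_continuant_le (fun _ => E) (fun i => 2 * π * (i * α)) hlam n 0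
    fun x => ?_
  have hphase : (fun i : ℤ => E - 2 * lam * cos (x + 2 * π * (i * α))) =
      fun i : ℤ => E - amoPot lam α (x / (2 * π)) i := by
    funext i
    rw [amoPot, mul_add, mul_div_cancel₀ x two_pi_pos.ne']
  rw [hphase]
  exact abs_blockDet_le_blockDetSup hlam hE α _ n 0

/-- `Λ` is an exponential growth rate for the block determinants at energy `E` seen at length `n`:
up to the error `exp (η * n)` it bounds the determinants of all lengths `a ≤ n`, uniformly in the
phase, and it is attained at length `n` for some phase. -/
structure IsGrowthScale (lam α E η : ℝ) (n : ℕ) (Λ : ℝ) : Prop where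
  log_le : log lam ≤ Λ
  abs_blockDet_le : ∀ a ≤ n, ∀ θ j, |blockDet (amoPot lam α θ) E a j| ≤ exp (a * Λ + η * n)
  exists_exp_le : ∃ ψ, exp (n * Λ) ≤ 2 * |blockDet (amoPot lam α ψ) E n 0|

lemma exists_isGrowthScale (hlam : 1 < lam) (hE : |E| ≤ 2 + 2 * lam) (α : ℝ) {η : ℝ} (hη : 0 < η)
    {k : ℕ} (hk : 1 ≤ k) : ∃ (n : ℕ) (Λ : ℝ), 1 ≤ n ∧ n ≤ k ∧
      (k : ℝ) ≤ n * exp (log (3 + 4 * lam) / η) ∧ IsGrowthScale lam α E η n Λ := by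
  have hlam₀ : 0 ≤ lam := by linarith
  have lower := pow_le_blockDetSup hlam₀ hE α
  have hpos (n : ℕ) : 0 < blockDetSup lam α E n := (by positivity : 0 < lam ^ n).trans_le (lower n)
  have log_lower (n : ℕ) : n * log lam ≤ log (blockDetSup lam α E n) := by
    rw [← log_pow]
    exact log_le_log (by positivity) (lower n)
  have log_upper (n : ℕ) : log (blockDetSup lam α E n) ≤ n * log (3 + 4 * lam) := by
    rw [← log_pow]
    exact log_le_log (hpos n) (blockDetSup_le_pow hlam₀ hE α n)
  obtain ⟨n, hn₁, hnk, hkn, hmax⟩ := exists_forall_le_mul_div_add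
    (fun n => (mul_nonneg n.cast_nonneg (log_nonneg hlam.le)).trans (log_lower n)) log_upper hη hk
  have hn₀ : (0 : ℝ) < n := by exact_mod_cast hn₁
  refine ⟨n, log (blockDetSup lam α E n) / n, hn₁, hnk, hkn, ?_, fun a ha θ j => ?_, ?_⟩
  · rw [le_div_iff₀' hn₀]
    exact log_lower n
  · exact (abs_blockDet_le_blockDetSup hlam₀ hE α θ a j).trans
      ((log_le_iff_le_exp (hpos a)).mp (hmax a ha))
  · rw [mul_div_cancel₀ _ hn₀.ne', exp_log (hpos n)]
    obtain ⟨ψ, hψ⟩ := exists_lt_of_lt_ciSup (half_lt_self (hpos n))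
    exact ⟨ψ, ((div_lt_iff₀' two_pos).mp hψ).le⟩

end BlockDetSup

end Scale

section Decay

/-- `k₀` minimises `|sin (π(2θ + xα))|` among the integers `x` with `|x| ≤ R`: the reflection
`j ↦ k₀ - j` is the one which comes closest to a symmetry of the potential. -/
def IsResonance (α θ R : ℝ) (k₀ : ℤ) : Prop :=
  |(k₀ : ℝ)| ≤ R ∧ ∀ x : ℤ, |(x : ℝ)| ≤ R →
    |sin (π * (2 * θ + k₀ * α))| ≤ |sin (π * (2 * θ + x * α))|

namespace SineDiophantine

variable {α τ : ℝ} {d : ℕ}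

lemma div_le_abs_sin (h : SineDiophantine α τ d) {R : ℝ} {x : ℤ} (hx : x ≠ 0)
    (hxR : |(x : ℝ)| ≤ R) : τ / (2 * (2 * R) ^ d) ≤ |sin (π * (x * α))| := by
  have hpos : 0 < |(x : ℝ)| := abs_pos.mpr (by exact_mod_cast hx)
  have hpow : |(x : ℝ)| ^ d ≤ (2 * R) ^ d := by
    gcongr
    linarith
  have hpowpos : 0 < (2 * R) ^ d := (pow_pos hpos d).trans_le hpow
  rw [div_le_iff₀' (by positivity)]
  refine (h.le_mul x hx).trans ?_
  gcongr
  linarith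

lemma div_le_one (h : SineDiophantine α τ d) {R : ℝ} (hR : 1 ≤ R) : τ / (2 * (2 * R) ^ d) ≤ 1 :=
  (h.div_le_abs_sin one_ne_zero (by simpa using hR)).trans (abs_sin_le_one _)

lemma div_le_abs_sin_of_ne_resonance (h : SineDiophantine α τ d) {θ R : ℝ} {k₀ x : ℤ}
    (hk₀ : IsResonance α θ R k₀) (hx : x ≠ k₀) (hxR : |(x : ℝ)| ≤ R) :
    τ / (2 * (2 * R) ^ d) ≤ |sin (π * (2 * θ + x * α))| := by
  have hτ := h.pos
  have hmono {i j : ℤ} (hij : i < j) (hi : |(i : ℝ)| ≤ R) (hj : |(j : ℝ)| ≤ R) :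
      τ / (2 * (2 * R) ^ d) ≤ τ / (2 * (j - i : ℝ) ^ d) := by
    have hgap : (0 : ℝ) < j - i := sub_pos.mpr (by exact_mod_cast hij)
    have hle : (j : ℝ) - i ≤ 2 * R := by linarith [(abs_le.mp hi).1, (abs_le.mp hj).2]
    gcongr
  have hmin := hk₀.2 x hxR
  rcases lt_or_gt_of_ne hx with hlt | hgt
  · exact (hmono hlt hxR hk₀.1).trans
      ((h.le_abs_sin_or_le_abs_sin (2 * θ) hlt).elim id fun hle => hle.trans hmin)
  · exact (hmono hgt hk₀.1 hxR).trans
      ((h.le_abs_sin_or_le_abs_sin (2 * θ) hgt).elim (fun hle => hle.trans hmin) id)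

end SineDiophantine

/-- The site `p` lies in the block of length `n` starting at `j`, and its distance to the two sites
adjacent to the block is at least `n / 10`. -/
def IsDeepIn (n : ℕ) (j p : ℤ) : Prop := (n : ℤ) ≤ 10 * (p - j + 1) ∧ (n : ℤ) ≤ 10 * (j + n - p)

/-- Around `p` we take about `4n/5` starting points, around `q` about `2n/5`. The two halves of the
block around `p` are exchanged by a reflection `j ↦ k₀ + 1 - n - j` only if `2p` is close to `k₀`;
around `q`, where this is not excluded, we therefore stay on one side of its centre. -/
lemma exists_blockPair {n : ℕ} (hn : 12 ≤ n) {p q k₀ T : ℤ} (hp : |p| ≤ T) (hq : |q| ≤ T)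
    (hpq : n < |p - q|) (hpqk : n < |p + q - k₀|) (hpk : n < |2 * p - k₀|) :
    ∃ (a b : ℤ) (N M : ℕ), N ≤ n ∧ M ≤ n ∧ n + 1 ≤ N + M ∧
      Disjoint (Finset.Ico a (a + N)) (Finset.Ico b (b + M)) ∧
      (∀ j ∈ blockPair a b N M, IsDeepIn n j p ∨ IsDeepIn n j q) ∧
      ∀ j ∈ blockPair a b N M, ∀ l ∈ blockPair a b N M,
        |j - l| ≤ 2 * T + 3 * n ∧ |j + l + n - 1| ≤ 2 * T + 3 * n ∧
          (j ≠ l → j + l + n - 1 ≠ k₀) := by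
  rw [abs_le] at hp hq
  rw [lt_abs] at hpq hpqk hpk
  obtain ⟨h, hh⟩ : ∃ h : ℕ, h = 2 * n / 5 := ⟨_, rfl⟩
  obtain ⟨g, hg⟩ : ∃ g : ℤ, g = (n : ℤ) / 2 := ⟨_, rfl⟩
  obtain ⟨b, hb⟩ : ∃ b : ℤ, b = q - g + 1 ∧ k₀ ≤ 2 * q ∨ b = q - g - h + 1 ∧ 2 * q < k₀ := by
    rcases le_or_gt k₀ (2 * q) with hk | hk
    exacts [⟨_, .inl ⟨rfl, hk⟩⟩, ⟨_, .inr ⟨rfl, hk⟩⟩]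
  refine ⟨p - g - h, b, 2 * h + 1, h, by omega, by omega, by omega, ?_, fun j hj => ?_,
    fun j hj l hl => ?_⟩
  · rw [Finset.disjoint_left]
    intro x hx hx'
    rw [Finset.mem_Ico] at hx hx'
    push_cast at hx hx'
    omega
  · rw [blockPair, Finset.mem_union, Finset.mem_Ico, Finset.mem_Ico] at hj
    push_cast at hj
    rw [IsDeepIn, IsDeepIn]
    omega
  · rw [blockPair, Finset.mem_union, Finset.mem_Ico, Finset.mem_Ico] at hj hl
    push_cast at hj hl
    rw [abs_le, abs_le]
    refine ⟨by omega, by omega, fun hjl => ?_⟩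
    rcases hb with hb | hb <;> rcases hj with hj | hj <;> rcases hl with hl | hl <;> omega

lemma SineDiophantine.sineSeparated {α τ : ℝ} {d : ℕ} (h : SineDiophantine α τ d) {θ R : ℝ}
    {k₀ : ℤ} (hk₀ : IsResonance α θ R k₀) {n : ℕ} {S : Finset ℤ} {B : ℤ} (hB : B ≤ R)
    (hS : ∀ j ∈ S, ∀ l ∈ S, |j - l| ≤ B ∧ |j + l + n - 1| ≤ B ∧ (j ≠ l → j + l + n - 1 ≠ k₀)) :
    SineSeparated α (θ + (n - 1) / 2 * α) (τ / (2 * (2 * R) ^ d)) S := by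
  intro j hj l hl hjl
  obtain ⟨hsub, hadd, hne⟩ := hS j hj l hl
  have cast_le {x : ℤ} (hx : |x| ≤ B) : |(x : ℝ)| ≤ R :=
    le_trans (by exact_mod_cast hx) hB
  have hsub := h.div_le_abs_sin (sub_ne_zero.mpr hjl) (cast_le hsub)
  have hadd := h.div_le_abs_sin_of_ne_resonance hk₀ (hne hjl) (cast_le hadd)
  push_cast at hsub hadd
  rw [show 2 * θ + ((j : ℝ) + l + n - 1) * α = 2 * (θ + (n - 1) / 2 * α) + (j + l) * α by ring]
    at hadd
  exact ⟨hsub, hadd⟩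

/-- `φ p` is dominated by an exponentially discounted value of `φ` at some other site. The
factor `1 / 2` is what makes the maximum principle below work. -/
def DecaysAt (φ : ℤ → ℝ) (γ : ℝ) (p : ℤ) : Prop :=
  ∃ x : ℤ, |φ p| ≤ 1 / 2 * (exp (-γ * |(p : ℝ) - x|) * |φ x|)

lemma exp_mul_add_le {Λ L δ η n x y : ℝ} (hL : L ≤ Λ) (hδ : 0 ≤ δ) (hxy : x + y = n) (hy : 0 ≤ y)
    (hny : n ≤ 10 * y) : exp (x * Λ + η * n) ≤
      exp (n * Λ) * (exp (η * n) * exp (-(δ * n / 10)) * exp (-(L - δ) * y)) := by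
  rw [← exp_add, ← exp_add, ← exp_add, exp_le_exp, ← hxy]
  nlinarith [mul_nonneg (sub_nonneg.mpr hL) hy, mul_nonneg hδ (sub_nonneg.mpr hny)]

section Green

variable {g : ℤ → ℝ} {E : ℝ} {φ : ℤ → ℝ} {n : ℕ} {Λ L η δ W : ℝ} {j p : ℤ}

lemma IsEigenfunction.abs_apply_add_le (h : IsEigenfunction g E φ) (hL : L ≤ Λ) (hδ : 0 ≤ δ)
    (hW : 0 ≤ W) (hdet : ∀ a ≤ n, ∀ j, |blockDet g E a j| ≤ exp (a * Λ + η * n))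
    (hj : exp (n * Λ) ≤ W * |blockDet g E n j|) {i r : ℕ} (hn : i + 1 + r = n)
    (hi : (n : ℝ) ≤ 10 * (i + 1)) (hr : (n : ℝ) ≤ 10 * (r + 1)) :
    |φ (j + i)| ≤ W * (exp (η * n) * exp (-(δ * n / 10))) *
      (exp (-(L - δ) * (i + 1)) * |φ (j - 1)| +
        exp (-(L - δ) * (r + 1)) * |φ (j + i + 1 + r)|) := by
  have hn' : (i : ℝ) + 1 + r = n := by exact_mod_cast hn
  have left_det := (hdet r (by omega) (j + i + 1)).trans
    (exp_mul_add_le hL hδ (by linarith : (r : ℝ) + (i + 1) = n) (by positivity) hi)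
  have right_det := (hdet i (by omega) j).trans
    (exp_mul_add_le hL hδ (by linarith : (i : ℝ) + (r + 1) = n) (by positivity) hr)
  set Z := exp (η * n) * exp (-(δ * n / 10))
  refine le_of_mul_le_mul_left ?_ (exp_pos (n * Λ))
  calc exp (n * Λ) * |φ (j + i)| ≤ W * |blockDet g E n j| * |φ (j + i)| := by gcongr
    _ = W * |blockDet g E r (j + i + 1) * φ (j - 1) +
          blockDet g E i j * φ (j + i + 1 + r)| := by
        rw [← h.blockDet_mul j i r, hn, abs_mul, mul_assoc]
    _ ≤ W * (|blockDet g E r (j + i + 1)| * |φ (j - 1)| +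
          |blockDet g E i j| * |φ (j + i + 1 + r)|) := by
        rw [← abs_mul, ← abs_mul]
        gcongr
        exact abs_add_le _ _
    _ ≤ W * (exp (n * Λ) * (Z * exp (-(L - δ) * (i + 1))) * |φ (j - 1)| +
          exp (n * Λ) * (Z * exp (-(L - δ) * (r + 1))) * |φ (j + i + 1 + r)|) := by gcongr
    _ = _ := by ring

lemma IsEigenfunction.decaysAt (h : IsEigenfunction g E φ) (hn : 1 ≤ n) (hL : L ≤ Λ) (hδ : 0 ≤ δ)
    (hW₀ : 0 ≤ W) (hW : 4 * (W * (exp (η * n) * exp (-(δ * n / 10)))) ≤ 1)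
    (hdet : ∀ a ≤ n, ∀ j, |blockDet g E a j| ≤ exp (a * Λ + η * n))
    (hj : exp (n * Λ) ≤ W * |blockDet g E n j|) (hp : IsDeepIn n j p) : DecaysAt φ (L - δ) p := by
  rw [IsDeepIn] at hp
  obtain ⟨i, rfl⟩ : ∃ i : ℕ, p = j + i := ⟨(p - j).toNat, by omega⟩
  obtain ⟨r, hr⟩ : ∃ r : ℕ, i + 1 + r = n := ⟨n - (i + 1), by omega⟩
  have hle := h.abs_apply_add_le hL hδ hW₀ hdet hj hr (by exact_mod_cast (by omega))
    (by exact_mod_cast (by omega))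
  set A := exp (-(L - δ) * (i + 1)) * |φ (j - 1)|
  set B := exp (-(L - δ) * (r + 1)) * |φ (j + i + 1 + r)|
  have hmax : |φ (j + i)| ≤ 1 / 2 * max A B := by
    have hsum : A + B ≤ 2 * max A B := by linarith [le_max_left A B, le_max_right A B]
    have hle := hle.trans (mul_le_mul_of_nonneg_left hsum (by positivity))
    have hmax₀ : 0 ≤ max A B := le_max_of_le_left (by positivity)
    nlinarith
  have left_dist : |((j + i : ℤ) : ℝ) - (j - 1 : ℤ)| = i + 1 := by
    rw [← abs_of_nonneg (by positivity : (0 : ℝ) ≤ i + 1)]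
    push_cast
    ring_nf
  have right_dist : |((j + i : ℤ) : ℝ) - (j + i + 1 + r : ℤ)| = r + 1 := by
    rw [← abs_of_nonneg (by positivity : (0 : ℝ) ≤ r + 1), ← abs_neg]
    push_cast
    ring_nf
  rcases max_choice A B with hAB | hAB <;> rw [hAB] at hmax
  · exact ⟨j - 1, by rwa [left_dist]⟩
  · exact ⟨j + i + 1 + r, by rwa [right_dist]⟩

end Green

end Decay

section Dichotomy

/-- The factor lost when interpolation moves a large block determinant of length `n` to one of the
given starting points, with `C` as in `SineDiophantine.exists_abs_blockDet_le` and with the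
separation of the nodes in a window of size `R`. -/
def interpolationLoss (τ : ℝ) (d : ℕ) (η C R : ℝ) (n : ℕ) : ℝ :=
  2 * (2 * n * (exp (η * n + C) / (τ / (2 * (2 * R) ^ d)) ^ 4))

lemma interpolationLoss_nonneg (τ : ℝ) (d : ℕ) (η C R : ℝ) (n : ℕ) :
    0 ≤ interpolationLoss τ d η C R n := by
  unfold interpolationLoss
  positivity

lemma interpolationLoss_le {τ R : ℝ} (hτ : 0 < τ) (hR : 0 < R) (d : ℕ) (η C : ℝ) {n : ℕ}
    (hn : n ≤ R) : interpolationLoss τ d η C R n ≤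
      4 * exp C * (2 * 2 ^ d / τ) ^ 4 * R ^ (4 * d + 1) * exp (η * n) := by
  rw [interpolationLoss, exp_add]
  calc 2 * (2 * n * (exp (η * n) * exp C / (τ / (2 * (2 * R) ^ d)) ^ 4))
      ≤ 2 * (2 * R * (exp (η * n) * exp C / (τ / (2 * (2 * R) ^ d)) ^ 4)) := by gcongr
    _ = 4 * exp C * (2 * 2 ^ d / τ) ^ 4 * R ^ (4 * d + 1) * exp (η * n) := by
        rw [mul_pow 2 R d]
        field_simp
        ring

lemma eventually_interpolationLoss_mul_le {τ : ℝ} (hτ : 0 < τ) (d : ℕ) (C : ℝ) {η δ c : ℝ}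
    (hη : 20 * η < δ) (hc : 0 < c) : ∀ᶠ R : ℝ in atTop, ∀ n : ℕ, n ≤ R → c * R ≤ n →
      4 * (interpolationLoss τ d η C R n * (exp (η * n) * exp (-(δ * n / 10)))) ≤ 1 := by
  set A := 4 * (4 * exp C * (2 * 2 ^ d / τ) ^ 4)
  set b := (δ / 10 - 2 * η) * c
  have hA : 0 < A := by positivity
  have hb : 0 < b := mul_pos (by linarith) hc
  filter_upwards [(isLittleO_pow_exp_pos_mul_atTop (4 * d + 1) hb).def (inv_pos.mpr hA),
    eventually_gt_atTop 0] with R hR hR₀ n hnR hcn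
  rw [norm_of_nonneg (by positivity), norm_of_nonneg (exp_pos _).le] at hR
  have hexp : exp (η * n) * (exp (η * n) * exp (-(δ * n / 10))) ≤ exp (-(b * R)) := by
    rw [← exp_add, ← exp_add, exp_le_exp]
    calc η * n + (η * n + -(δ * n / 10)) = -((δ / 10 - 2 * η) * n) := by ring
      _ ≤ -((δ / 10 - 2 * η) * (c * R)) := by gcongr; linarith
      _ = -(b * R) := by ring
  calc 4 * (interpolationLoss τ d η C R n * (exp (η * n) * exp (-(δ * n / 10))))
      ≤ 4 * (4 * exp C * (2 * 2 ^ d / τ) ^ 4 * R ^ (4 * d + 1) * exp (η * n) *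
          (exp (η * n) * exp (-(δ * n / 10)))) := by
        gcongr
        exact interpolationLoss_le hτ hR₀ d η C hnR
    _ = A * R ^ (4 * d + 1) * (exp (η * n) * (exp (η * n) * exp (-(δ * n / 10)))) := by ring
    _ ≤ A * (A⁻¹ * exp (b * R)) * exp (-(b * R)) := by gcongr
    _ = 1 := by rw [mul_inv_cancel_left₀ hA.ne', ← exp_add, add_neg_cancel, exp_zero]

lemma eventually_exists_isGrowthScale {lam : ℝ} (hlam : 1 < lam) (α : ℝ) {η σ : ℝ} (hη : 0 < η)
    (hσ : 0 < σ) : ∃ c > 0, ∀ᶠ R : ℝ in atTop, ∀ E, |E| ≤ 2 + 2 * lam →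
      ∃ (n : ℕ) (Λ : ℝ), 12 ≤ n ∧ n ≤ σ * R ∧ c * R ≤ n ∧ IsGrowthScale lam α E η n Λ := by
  set e := exp (log (3 + 4 * lam) / η)
  have hc : 0 < σ / (2 * e) := by positivity
  refine ⟨σ / (2 * e), hc, ?_⟩
  filter_upwards [(tendsto_id.const_mul_atTop hσ).eventually_ge_atTop 2,
    (tendsto_id.const_mul_atTop hc).eventually_ge_atTop 12] with R hσR hcR E hE
  rw [id] at hσR hcR
  have hfloor : 1 ≤ ⌊σ * R⌋₊ := (Nat.one_le_floor_iff _).mpr (by linarith)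
  obtain ⟨n, Λ, -, hnk, hkn, hscale⟩ := exists_isGrowthScale hlam hE α hη hfloor
  have hcn : σ / (2 * e) * R ≤ n := by
    rw [div_mul_eq_mul_div, div_le_iff₀ (by positivity)]
    linarith [Nat.lt_floor_add_one (σ * R)]
  exact ⟨n, Λ, by exact_mod_cast hcR.trans hcn, (Nat.le_floor_iff (by linarith)).mp hnk, hcn,
    hscale⟩

namespace SineDiophantine

variable {α τ : ℝ} {d : ℕ}

lemma exists_isDeepIn (h : SineDiophantine α τ d) {η : ℝ} (hη : 0 < η) :
    ∃ C, ∀ {lam E θ R Λ : ℝ} {n : ℕ} {k₀ T p q : ℤ}, IsGrowthScale lam α E η n Λ →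
      IsResonance α θ R k₀ → 1 ≤ R → 2 * T + 3 * n ≤ R → 12 ≤ n → |p| ≤ T → |q| ≤ T →
      n < |p - q| → n < |p + q - k₀| → n < |2 * p - k₀| →
      ∃ j, (IsDeepIn n j p ∨ IsDeepIn n j q) ∧
        exp (n * Λ) ≤ interpolationLoss τ d η C R n * |blockDet (amoPot lam α θ) E n j| := by
  obtain ⟨C, hC⟩ := h.exists_abs_blockDet_le hη
  refine ⟨C, fun {lam E θ R Λ n k₀ T p q} hscale hk₀ hR hT hn hp hq hpq hpqk hpk => ?_⟩
  obtain ⟨a, b, N, M, hN, hM, hNM, hdisj, hdeep, hwindow⟩ := exists_blockPair hn hp hq hpq hpqk hpk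
  have hsep := h.sineSeparated (n := n) hk₀ (by exact_mod_cast hT) hwindow
  have hτ := h.pos
  obtain ⟨ψ, hψ⟩ := hscale.exists_exp_le
  obtain ⟨j, hj, hle⟩ := hC lam E θ _ n a b N M hN hM hNM hdisj (by positivity)
    (h.div_le_one hR) hsep ψ
  refine ⟨j, hdeep j hj, hψ.trans ?_⟩
  rw [interpolationLoss, mul_assoc]
  gcongr

lemma eventually_decaysAt_or_decaysAt (h : SineDiophantine α τ d) {lam : ℝ} (hlam : 1 < lam)
    {δ σ : ℝ} (hδ : 0 < δ) (hσ : 0 < σ) (hσ' : σ ≤ 1 / 20) :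
    ∀ᶠ R : ℝ in atTop, ∀ θ E k₀, |E| ≤ 2 + 2 * lam → IsResonance α θ R k₀ →
      ∃ n : ℕ, n ≤ σ * R ∧ ∀ φ, IsEigenfunction (amoPot lam α θ) E φ →
        ∀ p q : ℤ, |(p : ℝ)| ≤ 2 / 5 * R → |(q : ℝ)| ≤ 2 / 5 * R →
          n < |p - q| → n < |p + q - k₀| → n < |2 * p - k₀| →
          DecaysAt φ (log lam - δ) p ∨ DecaysAt φ (log lam - δ) q := by
  have hη : 0 < δ / 21 := by positivity
  obtain ⟨C, hC⟩ := h.exists_isDeepIn hη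
  obtain ⟨c, hc, hscales⟩ := eventually_exists_isGrowthScale hlam α hη hσ
  filter_upwards [hscales, eventually_interpolationLoss_mul_le h.pos d C
    (by linarith : 20 * (δ / 21) < δ) hc, eventually_ge_atTop 1]
    with R hscales hloss hR θ E k₀ hE hk₀
  obtain ⟨n, Λ, hn, hnσ, hcn, hscale⟩ := hscales E hE
  have hnR : n ≤ 1 / 20 * R := hnσ.trans (by gcongr)
  refine ⟨n, hnσ, fun φ hφ p q hp hq hpq hpqk hpk => ?_⟩
  have le_floor {x : ℤ} (hx : |(x : ℝ)| ≤ 2 / 5 * R) : |x| ≤ ⌊2 / 5 * R⌋ :=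
    Int.le_floor.mpr (by exact_mod_cast hx)
  obtain ⟨j, hdeep, hj⟩ := hC hscale hk₀ hR
    (by linarith [Int.floor_le (2 / 5 * R)] : 2 * (⌊2 / 5 * R⌋ : ℝ) + 3 * n ≤ R) hn (le_floor hp)
    (le_floor hq) hpq hpqk hpk
  have decays {x : ℤ} (hx : IsDeepIn n j x) : DecaysAt φ (log lam - δ) x :=
    hφ.decaysAt (by omega) hscale.log_le hδ.le
      (interpolationLoss_nonneg τ d _ C R n) (hloss n (by linarith) hcn)
      (fun a ha => hscale.abs_blockDet_le a ha θ) hj hx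
  exact hdeep.imp decays decays

end SineDiophantine

end Dichotomy

section Localization

lemma not_decaysAt_of_forall_abs_le {φ : ℤ → ℝ} {γ : ℝ} (hγ : 0 ≤ γ) {m : ℤ}
    (hmax : ∀ x, |φ x| ≤ |φ m|) (hm : φ m ≠ 0) : ¬ DecaysAt φ γ m := by
  rintro ⟨x, hx⟩
  have hexp : exp (-γ * |(m : ℝ) - x|) ≤ 1 := by
    rw [exp_le_one_iff, neg_mul]
    exact neg_nonpos.mpr (by positivity)
  have hle := mul_le_mul hexp (hmax x) (abs_nonneg _) zero_le_one
  linarith [abs_pos.mpr hm]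

/-- A maximum principle: at a site `z` of decay, `exp (-γ * |y - z|) * |φ z|` is at most half of its
supremum. -/
lemma abs_le_of_forall_decaysAt_or_le {φ : ℤ → ℝ} {γ M D : ℝ} (hγ : 0 ≤ γ) (hM : ∀ x, |φ x| ≤ M)
    (hD : 0 ≤ D) {y : ℤ}
    (h : ∀ z : ℤ, DecaysAt φ γ z ∨ exp (-γ * |(y : ℝ) - z|) * |φ z| ≤ D) : |φ y| ≤ D := by
  set v : ℤ → ℝ := fun z => exp (-γ * |(y : ℝ) - z|) * |φ z|
  have hv : BddAbove (Set.range v) := by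
    refine ⟨M, Set.forall_mem_range.mpr fun z => ?_⟩
    refine (mul_le_of_le_one_left (abs_nonneg _) ?_).trans (hM z)
    rw [exp_le_one_iff, neg_mul]
    exact neg_nonpos.mpr (by positivity)
  have discount {z : ℤ} (hz : DecaysAt φ γ z) : v z ≤ 1 / 2 * ⨆ z, v z := by
    obtain ⟨x, hx⟩ := hz
    calc v z ≤ exp (-γ * |(y : ℝ) - z|) * (1 / 2 * (exp (-γ * |(z : ℝ) - x|) * |φ x|)) :=
          mul_le_mul_of_nonneg_left hx (exp_pos _).le
      _ = 1 / 2 * (exp (-γ * (|(y : ℝ) - z| + |(z : ℝ) - x|)) * |φ x|) := by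
          rw [mul_add, exp_add]
          ring
      _ ≤ 1 / 2 * v x := by
          have := mul_le_mul_of_nonneg_left (abs_sub_le (y : ℝ) z x) hγ
          refine mul_le_mul_of_nonneg_left (mul_le_mul_of_nonneg_right ?_ (abs_nonneg _)) (by simp)
          rw [exp_le_exp]
          linarith
      _ ≤ 1 / 2 * ⨆ z, v z := by
          gcongr
          exact le_ciSup hv x
  have hsup : ⨆ z, v z ≤ max (1 / 2 * ⨆ z, v z) D :=
    ciSup_le fun z => (h z).elim (fun hz => le_max_of_le_left (discount hz)) (le_max_of_le_right ·)
  have hy : |φ y| ≤ ⨆ z, v z := by simpa [v] using le_ciSup hv y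
  rcases le_max_iff.mp hsup with hsup | hsup <;> linarith

/-- The profile with exponential peaks of heights `P₁` and `P₂` at `m₁` and `m₂`. It bounds an
eigenfunction with its maximum at `m₁` if the potential almost has a reflection symmetry exchanging
`m₁` and `m₂`. -/
def twoPeakProfile (P₁ P₂ m₁ m₂ γ y : ℝ) : ℝ :=
  max (P₁ * exp (-γ * |y - m₁|)) (P₂ * exp (-γ * |y - m₂|))

section TwoPeakProfile

variable {P₁ P₁' P₂ m₁ m₂ γ γ' y c : ℝ}

lemma twoPeakProfile_nonneg (hP₁ : 0 ≤ P₁) : 0 ≤ twoPeakProfile P₁ P₂ m₁ m₂ γ y :=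
  le_max_of_le_left (by positivity)

lemma twoPeakProfile_mono_left (h : P₁ ≤ P₁') :
    twoPeakProfile P₁ P₂ m₁ m₂ γ y ≤ twoPeakProfile P₁' P₂ m₁ m₂ γ y :=
  max_le_max (by gcongr) le_rfl

lemma twoPeakProfile_le_of_le (hP₁ : 0 ≤ P₁) (hP₂ : 0 ≤ P₂) (h : γ' ≤ γ) :
    twoPeakProfile P₁ P₂ m₁ m₂ γ y ≤ twoPeakProfile P₁ P₂ m₁ m₂ γ' y :=
  max_le_max (by gcongr) (by gcongr)

lemma exp_neg_mul_abs_sub_le {x m : ℝ} (hγ : 0 ≤ γ) (h : |x - m| ≤ c) :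
    exp (-γ * |y - x|) ≤ exp (γ * c) * exp (-γ * |y - m|) := by
  rw [← exp_add, exp_le_exp]
  nlinarith [abs_sub_le y x m]

lemma twoPeakProfile_sub_one_le (hP₁ : 0 ≤ P₁) (hP₂ : 0 ≤ P₂) (hγ : 0 ≤ γ) :
    twoPeakProfile P₁ P₂ m₁ m₂ γ (y - 1) ≤ exp γ * twoPeakProfile P₁ P₂ m₁ m₂ γ y := by
  have shift (m : ℝ) : exp (-γ * |y - 1 - m|) ≤ exp γ * exp (-γ * |y - m|) := by
    have := exp_neg_mul_abs_sub_le (y := y) (x := m + 1) (m := m) (c := 1) hγ (by simp)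
    rwa [mul_one, ← sub_sub, sub_right_comm] at this
  rw [twoPeakProfile, twoPeakProfile, mul_max_of_nonneg _ _ (exp_pos _).le, mul_left_comm,
    mul_left_comm (exp γ) P₂]
  exact max_le_max (mul_le_mul_of_nonneg_left (shift m₁) hP₁)
    (mul_le_mul_of_nonneg_left (shift m₂) hP₂)

end TwoPeakProfile

lemma IsEigenfunction.abs_le_mul_twoPeakProfile {g : ℤ → ℝ} {E : ℝ} {φ : ℤ → ℝ}
    (h : IsEigenfunction g E φ) {γ X P T : ℝ} {m₁ m₂ : ℤ} {n : ℕ} (hγ : 0 ≤ γ) (hX : 1 ≤ X)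
    (hg : ∀ i, |E - g i| ≤ X - 1) (hmax : ∀ x, |φ x| ≤ |φ m₁|) (hP : |φ m₂| ≤ P)
    (hP' : |φ (m₂ - 1)| ≤ P)
    (hdecay : ∀ z : ℤ, |(z : ℝ)| ≤ T → n < |z - m₁| → n < |z - m₂| → DecaysAt φ γ z)
    {y : ℤ} (hy : |(y : ℝ) - m₁| + |(y : ℝ)| ≤ T) :
    |φ y| ≤ exp (γ * n) * X ^ n * twoPeakProfile |φ m₁| P m₁ m₂ γ y := by
  have hpow : 1 ≤ X ^ n := one_le_pow₀ hX
  set D := exp (γ * n) * X ^ n * twoPeakProfile |φ m₁| P m₁ m₂ γ y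
  have left_le : exp (γ * n) * exp (-γ * |(y : ℝ) - m₁|) * |φ m₁| ≤ D :=
    calc exp (γ * n) * exp (-γ * |(y : ℝ) - m₁|) * |φ m₁|
        = exp (γ * n) * 1 * (|φ m₁| * exp (-γ * |(y : ℝ) - m₁|)) := by ring
      _ ≤ D := mul_le_mul (by gcongr) (le_max_left _ _) (by positivity) (by positivity)
  have right_le : exp (γ * n) * exp (-γ * |(y : ℝ) - m₂|) * (X ^ n * P) ≤ D :=
    calc exp (γ * n) * exp (-γ * |(y : ℝ) - m₂|) * (X ^ n * P)
        = exp (γ * n) * X ^ n * (P * exp (-γ * |(y : ℝ) - m₂|)) := by ring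
      _ ≤ D := mul_le_mul_of_nonneg_left (le_max_right _ _) (by positivity)
  refine abs_le_of_forall_decaysAt_or_le hγ hmax (le_trans (by positivity) left_le) fun z => ?_
  have near {m : ℤ} {Q : ℝ} (hz : |z - m| ≤ n) (hQ : |φ z| ≤ Q) : exp (-γ * |(y : ℝ) - z|) * |φ z| ≤
      exp (γ * n) * exp (-γ * |(y : ℝ) - m|) * Q :=
    mul_le_mul (exp_neg_mul_abs_sub_le hγ (by exact_mod_cast hz)) hQ (abs_nonneg _) (by positivity)
  rcases lt_or_ge T |(z : ℝ)| with hfar | hz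
  · have hdist : |(y : ℝ) - m₁| ≤ |(y : ℝ) - z| := by
      linarith [abs_sub_abs_le_abs_sub (z : ℝ) y, abs_sub_comm (z : ℝ) y]
    have hexp : exp (-γ * |(y : ℝ) - z|) ≤ exp (γ * n) * exp (-γ * |(y : ℝ) - m₁|) := by
      rw [← exp_add, exp_le_exp]
      nlinarith [(by positivity : 0 ≤ γ * n)]
    exact .inr ((mul_le_mul hexp (hmax z) (abs_nonneg _) (by positivity)).trans left_le)
  rcases le_or_gt |z - m₁| n with hz₁ | hz₁
  · exact .inr ((near hz₁ (hmax z)).trans left_le)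
  rcases le_or_gt |z - m₂| n with hz₂ | hz₂
  · exact .inr ((near hz₂ (h.abs_apply_le_pow_mul hX hg hP hP' hz₂)).trans right_le)
  · exact .inl (hdecay z hz hz₁ hz₂)

end Localization

section PairNorm

lemma pairNorm_nonneg (a b : ℝ) : 0 ≤ pairNorm a b := sqrt_nonneg _

lemma abs_left_le_pairNorm (a b : ℝ) : |a| ≤ pairNorm a b :=
  abs_le_sqrt (le_add_of_nonneg_right (sq_nonneg b))

lemma abs_right_le_pairNorm (a b : ℝ) : |b| ≤ pairNorm a b :=
  abs_le_sqrt (le_add_of_nonneg_left (sq_nonneg a))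

lemma pairNorm_le_abs_add_abs (a b : ℝ) : pairNorm a b ≤ |a| + |b| := by
  rw [pairNorm, sqrt_le_left (by positivity)]
  nlinarith [sq_abs a, sq_abs b, mul_nonneg (abs_nonneg a) (abs_nonneg b)]

end PairNorm

section AlmostMathieu

variable {lam α τ : ℝ} {d : ℕ}

namespace SineDiophantine

lemma eventually_decaysAt (h : SineDiophantine α τ d) (hlam : 1 < lam) {δ σ : ℝ} (hδ : 0 < δ)
    (hδ' : δ ≤ log lam) (hσ : 0 < σ) (hσ' : σ ≤ 1 / 20) :
    ∀ᶠ R : ℝ in atTop, ∀ θ E φ (ms k₀ : ℤ),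
      IsEigenfunction (amoPot lam α θ) E φ → (∀ x, |φ x| ≤ |φ ms|) → φ ms ≠ 0 →
      |(ms : ℝ)| ≤ 2 / 5 * R → IsResonance α θ R k₀ →
      ∃ n : ℕ, n ≤ σ * R ∧ ∀ y : ℤ, |(y : ℝ)| ≤ 2 / 5 * R → n < |y - ms| → n < |y - (k₀ - ms)| →
        DecaysAt φ (log lam - δ) y := by
  filter_upwards [h.eventually_decaysAt_or_decaysAt hlam hδ hσ hσ']
    with R hR θ E φ ms k₀ hφ hmax hne hms hk₀
  obtain ⟨n, hn, hdich⟩ := hR θ E k₀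
    (hφ.abs_energy_le (abs_amoPot_le (by linarith) α θ) hmax hne) hk₀
  refine ⟨n, hn, fun y hy hyms hyk => ?_⟩
  have hms_not := not_decaysAt_of_forall_abs_le (sub_nonneg.mpr hδ') hmax hne
  rw [lt_abs] at hyms hyk
  by_cases hres : n < |2 * ms - k₀|
  · exact (hdich φ hφ ms y hms hy (by rw [lt_abs]; omega) (by rw [lt_abs]; omega) hres).resolve_left
      hms_not
  · rw [not_lt, abs_le] at hres
    exact (hdich φ hφ y ms hy hms (by rw [lt_abs]; omega) (by rw [lt_abs]; omega)
      (by rw [lt_abs]; omega)).resolve_right hms_not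

lemma eventually_abs_le_exp_mul_twoPeakProfile (h : SineDiophantine α τ d) (hlam : 1 < lam)
    {δ ε : ℝ} (hδ : 0 < δ) (hδ' : δ ≤ log lam) (hε : 0 < ε) :
    ∀ᶠ R : ℝ in atTop, ∀ θ E φ (ms k₀ : ℤ),
      IsEigenfunction (amoPot lam α θ) E φ → (∀ x, |φ x| ≤ |φ ms|) → φ ms ≠ 0 →
      |(ms : ℝ)| ≤ R / 10 → IsResonance α θ R k₀ → ∀ y : ℤ, |(y : ℝ)| ≤ R / 10 + 1 →
        |φ y| ≤ exp (ε * R) * twoPeakProfile (pairNorm (φ ms) (φ (ms - 1)))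
          (pairNorm (φ (k₀ - ms)) (φ (k₀ - ms - 1))) ms (k₀ - ms) (log lam - δ) y := by
  have hrate : 0 < log lam + log (3 + 4 * lam) := add_pos (log_pos hlam) (log_pos (by linarith))
  filter_upwards [h.eventually_decaysAt hlam hδ hδ' (lt_min (by norm_num) (div_pos hε hrate))
    (min_le_left _ _), eventually_ge_atTop 20]
    with R hR hR₀ θ E φ ms k₀ hφ hmax hne hms hk₀ y hy
  have hE := hφ.abs_energy_le (abs_amoPot_le (by linarith) α θ) hmax hne
  obtain ⟨n, hn, hdecay⟩ := hR θ E φ ms k₀ hφ hmax hne (by linarith) hk₀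
  have hnR : (log lam + log (3 + 4 * lam)) * n ≤ ε * R := by
    rw [← le_div_iff₀' hrate, mul_div_right_comm]
    exact hn.trans (mul_le_mul_of_nonneg_right (min_le_right _ _) (by linarith))
  have hgrowth : exp ((log lam - δ) * n) * (3 + 4 * lam) ^ n ≤ exp (ε * R) := by
    rw [← exp_log (pow_pos (by linarith : 0 < 3 + 4 * lam) n), log_pow, ← exp_add, exp_le_exp]
    nlinarith [(by positivity : 0 ≤ δ * n)]
  have hle := hφ.abs_le_mul_twoPeakProfile (sub_nonneg.mpr hδ') (by linarith)
    (abs_sub_amoPot_le (by linarith) hE α θ) hmax (abs_left_le_pairNorm _ _)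
    (abs_right_le_pairNorm _ _) hdecay (y := y) (by linarith [abs_sub (y : ℝ) ms])
  rw [Int.cast_sub] at hle
  exact hle.trans (mul_le_mul hgrowth (twoPeakProfile_mono_left (abs_left_le_pairNorm _ _))
    (twoPeakProfile_nonneg (abs_nonneg _)) (exp_pos _).le)

lemma eventually_pairNorm_le_exp_mul_twoPeakProfile (h : SineDiophantine α τ d) (hlam : 1 < lam)
    {ε : ℝ} (hε : 0 < ε) (hε' : ε ≤ log lam) :
    ∀ᶠ R : ℝ in atTop, ∀ θ E φ (ms k₀ : ℤ),
      IsEigenfunction (amoPot lam α θ) E φ → (∀ x, |φ x| ≤ |φ ms|) → φ ms ≠ 0 →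
      |(ms : ℝ)| ≤ R / 10 → IsResonance α θ R k₀ → ∀ y : ℤ, |(y : ℝ)| ≤ R / 10 →
        pairNorm (φ y) (φ (y - 1)) ≤ exp (ε * R) * twoPeakProfile (pairNorm (φ ms) (φ (ms - 1)))
          (pairNorm (φ (k₀ - ms)) (φ (k₀ - ms - 1))) ms (k₀ - ms) (log lam - ε) y := by
  filter_upwards [h.eventually_abs_le_exp_mul_twoPeakProfile hlam hε hε' (half_pos hε),
    (tendsto_exp_atTop.comp (tendsto_id.const_mul_atTop (half_pos hε))).eventually_ge_atTop
      (1 + lam)] with R hR hRlam θ E φ ms k₀ hφ hmax hne hms hk₀ y hy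
  have hbound := hR θ E φ ms k₀ hφ hmax hne hms hk₀
  set P₁ := pairNorm (φ ms) (φ (ms - 1))
  set P₂ := pairNorm (φ (k₀ - ms)) (φ (k₀ - ms - 1))
  have hP₁ : 0 ≤ P₁ := pairNorm_nonneg _ _
  have hprofile := twoPeakProfile_nonneg (P₂ := P₂) (m₁ := ms) (m₂ := k₀ - ms) (γ := log lam - ε)
    (y := y) hP₁
  have hleft := hbound y (by linarith)
  have hright := hbound (y - 1) (by
    push_cast
    linarith [abs_sub (y : ℝ) 1, abs_one (α := ℝ)])
  rw [Int.cast_sub, Int.cast_one] at hright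
  have hshift := twoPeakProfile_sub_one_le (m₁ := ms) (m₂ := k₀ - ms) (y := y) hP₁
    (pairNorm_nonneg _ _ : 0 ≤ P₂) (sub_nonneg.mpr hε')
  have hexp : exp (log lam - ε) ≤ lam := by
    rw [← le_log_iff_exp_le (by linarith)]
    linarith
  set F := twoPeakProfile P₁ P₂ ms (k₀ - ms) (log lam - ε)
  calc pairNorm (φ y) (φ (y - 1)) ≤ |φ y| + |φ (y - 1)| := pairNorm_le_abs_add_abs _ _
    _ ≤ exp (ε / 2 * R) * F y + exp (ε / 2 * R) * (lam * F y) := by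
        refine add_le_add hleft (hright.trans ?_)
        gcongr
        exact hshift.trans (by gcongr)
    _ = exp (ε / 2 * R) * (1 + lam) * F y := by ring
    _ ≤ exp (ε / 2 * R) * exp (ε / 2 * R) * F y := by gcongr; exact hRlam
    _ = exp (ε * R) * F y := by rw [← exp_add, ← add_mul, add_halves]

end SineDiophantine

end AlmostMathieu

theorem amo_block_resolvent_expansion_bound_general {lam α : ℝ} (hlam : 1 < lam)
    (hα : IsDiophantine α) {C₁ ε : ℝ} (hC₁ : 0 < C₁) (hε : 0 < ε) :
    ∃ K : ℕ, ∀ k : ℕ, K ≤ k → ∀ (θ E : ℝ) (φ : ℤ → ℝ) (ms k₀ : ℤ),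
      IsEigenfunction (amoPot lam α θ) E φ → (∀ n, |φ n| ≤ |φ ms|) → |(ms : ℝ)| ≤ C₁ * k →
      IsResonance α θ (10 * C₁ * k) k₀ → ∀ y : ℤ, |(y : ℝ)| ≤ C₁ * k →
        pairNorm (φ y) (φ (y - 1)) ≤
          exp (ε * k) * twoPeakProfile (pairNorm (φ ms) (φ (ms - 1)))
            (pairNorm (φ (k₀ - ms)) (φ (k₀ - ms - 1))) ms (k₀ - ms) (log lam - ε) y := by
  obtain ⟨τ, d, h⟩ := hα.exists_sineDiophantine
  obtain ⟨ε', hε'₀, hε'⟩ : ∃ ε' > 0, ε' ≤ log lam ∧ ε' ≤ ε ∧ ε' ≤ ε / (10 * C₁) :=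
    ⟨min (log lam) (min ε (ε / (10 * C₁))),
      lt_min (log_pos hlam) (lt_min hε (by positivity)), by simp⟩
  obtain ⟨hε'_log, hε'_le, hε'_div⟩ := hε'
  have hlarge := (tendsto_natCast_atTop_atTop.const_mul_atTop
    (by positivity : 0 < 10 * C₁)).eventually
    (h.eventually_pairNorm_le_exp_mul_twoPeakProfile hlam hε'₀ hε'_log)
  obtain ⟨K, hK⟩ := eventually_atTop.mp hlarge
  refine ⟨K, fun k hk θ E φ ms k₀ hφ hmax hms hk₀ y hy => ?_⟩
  rcases eq_or_ne (φ ms) 0 with hzero | hne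
  · have hφ₀ (x : ℤ) : φ x = 0 := abs_nonpos_iff.mp (by simpa [hzero] using hmax x)
    simp [hφ₀, pairNorm, twoPeakProfile]
  · refine (hK k hk θ E φ ms k₀ hφ hmax hne (by linarith) hk₀ y (by linarith)).trans ?_
    have hexp : ε' * (10 * C₁ * k) ≤ ε * k := by
      rw [← mul_assoc]
      exact mul_le_mul_of_nonneg_right ((le_div_iff₀ (by positivity)).mp hε'_div) k.cast_nonneg
    exact mul_le_mul (by gcongr) (twoPeakProfile_le_of_le (pairNorm_nonneg _ _)
      (pairNorm_nonneg _ _) (by linarith)) (twoPeakProfile_nonneg (pairNorm_nonneg _ _))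
      (exp_pos _).le

theorem amo_block_resolvent_expansion_bound
    (lam α θ : ℝ) (hlam : 1 < lam) (hα : IsDiophantine α)
    (C₁ : ℝ) (hC₁ : 3 ≤ C₁) :
    ∃ ε₀ : ℝ, 0 < ε₀ ∧ ∀ ε : ℝ, 0 < ε → ε < ε₀ →
      ∃ K : ℕ, ∀ k : ℕ, K ≤ k →
        ∀ (φ : ℤ → ℝ) (E : ℝ) (ms k₀ : ℤ),
          IsEigenfunction (amoPot lam α θ) E φ →
          Summable (fun n : ℤ => φ n ^ 2) →
          (∑' n : ℤ, φ n ^ 2) = 1 →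
          (∀ n : ℤ, |φ n| ≤ |φ ms|) →
          |(ms : ℝ)| ≤ (k : ℝ) →
          |(k₀ : ℝ)| ≤ 10 * C₁ * k →
          (∀ x : ℤ, |(x : ℝ)| ≤ 10 * C₁ * k →
            |Real.sin (Real.pi * (2 * θ + k₀ * α))| ≤
              |Real.sin (Real.pi * (2 * θ + x * α))|) →
          ∀ y : ℤ, |(y : ℝ)| ≤ C₁ * k →
            pairNorm (φ y) (φ (y - 1)) ≤
              Real.exp (ε * k) *
                max (pairNorm (φ ms) (φ (ms - 1)) *
                      Real.exp (-(Real.log lam - ε) * |(y : ℝ) - (ms : ℝ)|))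
                    (pairNorm (φ (k₀ - ms)) (φ (k₀ - ms - 1)) *
                      Real.exp (-(Real.log lam - ε) * |(y : ℝ) - ((k₀ : ℝ) - (ms : ℝ))|)) := by
  refine ⟨1, one_pos, fun ε hε _ => ?_⟩
  obtain ⟨K, hK⟩ := amo_block_resolvent_expansion_bound_general hlam hα (by linarith : 0 < C₁) hε
  exact ⟨K, fun k hk φ E ms k₀ hφ _ _ hmax hms hk₀ hmin => hK k hk θ E φ ms k₀ hφ hmax
    (hms.trans (le_mul_of_one_le_left k.cast_nonneg (by linarith))) ⟨hk₀, hmin⟩⟩
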